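/- arXiv:1802.03210 — 3 statements merged into one kernel-verified Lean document; each statement's English description precedes it below -/
import Mathlib

section
/- For every n ≥ 3, let X_n be the order complex of the poset of nonempty proper subsets of {1, …, n} ordered by inclusion (i.e., the barycentric subdivision of the boundary of the (n−1)-simplex): its vertices are the subsets A with ∅ ≠ A ⊊ {1,…,n}, and its faces are the chains A_1 ⊊ A_2 ⊊ ⋯ ⊊ A_j of such subsets. Then h^{n−3}(X_n) = 4/(n(n−1)). -/
open Finset

section Simplicial

variable {V : Type*} [DecidableEq V]

/-- `X` is a finite abstract simplicial complex: a finite family of nonempty finite sets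
closed under taking nonempty subsets. -/
def IsComplex (X : Finset (Finset V)) : Prop :=
  (∀ σ ∈ X, σ.Nonempty) ∧ ∀ σ ∈ X, ∀ τ ⊆ σ, τ.Nonempty → τ ∈ X

/-- The `k`-dimensional faces of `X` (faces of cardinality `k+1`). -/
def faces (X : Finset (Finset V)) (k : ℕ) : Finset (Finset V) :=
  X.filter fun σ => σ.card = k + 1

/-- The support of a `k`-cochain. -/
def csupp (X : Finset (Finset V)) (k : ℕ) (φ : Finset V → ZMod 2) : Finset (Finset V) :=
  (faces X k).filter fun σ => φ σ ≠ 0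

/-- The norm of a `k`-cochain. -/
def cnorm (X : Finset (Finset V)) (k : ℕ) (φ : Finset V → ZMod 2) : ℕ :=
  (csupp X k φ).card

/-- The coboundary of a `k`-cochain, as a `(k+1)`-cochain. -/
def cob (X : Finset (Finset V)) (k : ℕ) (φ : Finset V → ZMod 2) : Finset V → ZMod 2 :=
  fun τ => ∑ σ ∈ (faces X k).filter (fun σ => σ ⊆ τ), φ σ

/-- The cosystolic norm of a `k`-cochain, with the reduced convention at `k = 0`. -/
noncomputable def cosys (X : Finset (Finset V)) (k : ℕ) (φ : Finset V → ZMod 2) : ℕ :=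
  if k = 0 then
    min (cnorm X 0 φ) (cnorm X 0 fun σ => 1 + φ σ)
  else
    sInf {m | ∃ ψ : Finset V → ZMod 2, m = cnorm X k fun τ => φ τ + cob X (k - 1) ψ τ}

/-- The `k`-th (coboundary) Cheeger constant, valued in `ℝ≥0∞` (`⊤` if no cochain has
positive cosystolic norm). -/
noncomputable def cheeger (X : Finset (Finset V)) (k : ℕ) : ENNReal :=
  sInf {r : ENNReal | ∃ φ : Finset V → ZMod 2, 0 < cosys X k φ ∧
    r = (cnorm X (k + 1) (cob X k φ) : ENNReal) / (cosys X k φ : ENNReal)}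

/-- The boundary of a `k`-chain, as a `(k-1)`-chain. -/
def bdry (X : Finset (Finset V)) (k : ℕ) (c : Finset V → ZMod 2) : Finset V → ZMod 2 :=
  fun τ => ∑ σ ∈ (faces X k).filter (fun σ => τ ⊆ σ), c σ

/-- A `k`-cycle, with the reduced convention at `k = 0`. -/
def IsCycle (X : Finset (Finset V)) (k : ℕ) (c : Finset V → ZMod 2) : Prop :=
  if k = 0 then ∑ σ ∈ faces X 0, c σ = 0
  else ∀ τ ∈ faces X (k - 1), bdry X k c τ = 0

/-- Evaluation of a `k`-cochain on a `k`-chain. -/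
def eval (X : Finset (Finset V)) (k : ℕ) (φ c : Finset V → ZMod 2) : ZMod 2 :=
  ∑ σ ∈ faces X k, φ σ * c σ

end Simplicial

/-- The order complex of the poset of nonempty proper subsets of `{1, …, n}` (i.e. the
barycentric subdivision of the boundary of the `(n-1)`-simplex): faces are the nonempty
chains of nonempty proper subsets of `Fin n`. -/
def sdBoundarySimplex (n : ℕ) : Finset (Finset (Finset (Fin n))) :=
  Finset.univ.filter fun σ =>
    σ.Nonempty ∧ (∀ A ∈ σ, A.Nonempty ∧ A ≠ Finset.univ) ∧
      ∀ A ∈ σ, ∀ B ∈ σ, A ⊆ B ∨ B ⊆ A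

namespace SdBoundary

open Equiv

variable {m : ℕ}

/-! ### Adjacent transpositions and inversions -/

/-- The transposition of the positions `i` and `i + 1`. -/
def adj (i : Fin m) : Perm (Fin (m + 1)) := swap i.castSucc i.succ

lemma mul_adj_mul_adj (σ : Perm (Fin (m + 1))) (i : Fin m) : σ * adj i * adj i = σ := by
  simp [adj, mul_assoc]

lemma mul_adj_ne (σ : Perm (Fin (m + 1))) (i : Fin m) : σ * adj i ≠ σ := by
  intro h
  have := congrArg (fun τ : Perm (Fin (m + 1)) => σ.symm (τ i.castSucc)) h
  simp [adj, Fin.ext_iff] at this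

lemma symm_mul_adj (σ : Perm (Fin (m + 1))) (i : Fin m) (x : Fin (m + 1)) :
    (σ * adj i).symm x = adj i (σ.symm x) := by
  rw [Equiv.symm_apply_eq]
  simp [adj]

lemma adj_le_castSucc_iff {i j : Fin m} (h : j ≠ i) (u : Fin (m + 1)) :
    adj i u ≤ j.castSucc ↔ u ≤ j.castSucc := by
  have : (j : ℕ) ≠ i := fun h' => h (Fin.ext h')
  simp only [adj, swap_apply_def]
  split_ifs with h1 h2
  · subst h1; simp only [Fin.le_def, Fin.val_succ, Fin.val_castSucc]; omega
  · subst h2; simp only [Fin.le_def, Fin.val_succ, Fin.val_castSucc]; omega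
  · rfl

lemma adj_lt_adj_iff (i : Fin m) {u v : Fin (m + 1)}
    (h₁ : ¬ (u = i.castSucc ∧ v = i.succ)) (h₂ : ¬ (v = i.castSucc ∧ u = i.succ)) :
    adj i u < adj i v ↔ u < v := by
  simp only [adj, swap_apply_def]
  split_ifs <;>
    simp only [Fin.ext_iff, Fin.lt_def, Fin.val_succ, Fin.val_castSucc] at * <;> omega

/-- The increasing pairs of elements of `Fin n`. -/
def pairs (n : ℕ) : Finset (Fin n × Fin n) := univ.filter fun p => p.1 < p.2

lemma two_mul_card_pairs (n : ℕ) : 2 * (pairs n).card = n * (n - 1) := by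
  have h : (univ : Finset (Fin n)).offDiag = pairs n ∪ (pairs n).image Prod.swap := by
    ext ⟨a, b⟩
    simp [pairs, lt_or_lt_iff_ne]
  have hd : Disjoint (pairs n) ((pairs n).image Prod.swap) := by
    rw [Finset.disjoint_left]
    rintro ⟨a, b⟩ h₁ h₂
    simp [pairs] at h₁ h₂
    exact lt_asymm h₁ h₂
  have hc := congrArg card h
  rw [offDiag_card, card_union_of_disjoint hd, card_image_of_injective _ Prod.swap_injective,
    card_univ, Fintype.card_fin] at hc
  rw [Nat.mul_sub_one]
  omega

/-- The pairs of values that `σ` lists in decreasing order. -/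
def inversions (σ : Perm (Fin (m + 1))) : Finset (Fin (m + 1) × Fin (m + 1)) :=
  (pairs (m + 1)).filter fun p => σ.symm p.2 < σ.symm p.1

/-- The values at positions `i` and `i + 1`, in increasing order. -/
def swappedPair (σ : Perm (Fin (m + 1))) (i : Fin m) : Fin (m + 1) × Fin (m + 1) :=
  (min (σ i.castSucc) (σ i.succ), max (σ i.castSucc) (σ i.succ))

lemma swappedPair_mul_adj (σ : Perm (Fin (m + 1))) (i : Fin m) :
    swappedPair (σ * adj i) i = swappedPair σ i := by
  simp [swappedPair, adj, min_comm, max_comm]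

lemma castSucc_lt_succ (i : Fin m) : i.castSucc < i.succ := by
  simp [Fin.lt_def]

lemma castSucc_ne_succ (σ : Perm (Fin (m + 1))) (i : Fin m) : σ i.castSucc ≠ σ i.succ := by
  simp [Fin.ext_iff]

lemma swappedPair_mem_pairs (σ : Perm (Fin (m + 1))) (i : Fin m) :
    swappedPair σ i ∈ pairs (m + 1) := by
  simpa [swappedPair, pairs] using (castSucc_lt_succ i).ne'

lemma mem_inversions_mul_adj {σ : Perm (Fin (m + 1))} {i : Fin m} {p : Fin (m + 1) × Fin (m + 1)}
    (h : p ≠ swappedPair σ i) : p ∈ inversions (σ * adj i) ↔ p ∈ inversions σ := by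
  obtain ⟨x, y⟩ := p
  simp only [inversions, mem_filter, symm_mul_adj, pairs, mem_univ, true_and]
  refine and_congr_right fun hxy => adj_lt_adj_iff i ?_ ?_ <;>
  · rintro ⟨h₁, h₂⟩
    rw [Equiv.symm_apply_eq] at h₁ h₂
    subst h₁ h₂
    simp [swappedPair, hxy.le] at h

lemma swappedPair_mem_inversions_iff (σ : Perm (Fin (m + 1))) (i : Fin m) :
    swappedPair σ i ∈ inversions σ ↔ σ i.succ < σ i.castSucc := by
  simp only [inversions, mem_filter, swappedPair_mem_pairs, true_and]
  rcases lt_or_gt_of_ne (castSucc_ne_succ σ i) with h | h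
  · simp [swappedPair, h.le, h.not_gt, (castSucc_lt_succ i).not_gt]
  · simp [swappedPair, h.le, h]

lemma swappedPair_mem_inversions_mul_adj (σ : Perm (Fin (m + 1))) (i : Fin m) :
    swappedPair σ i ∈ inversions (σ * adj i) ↔ swappedPair σ i ∉ inversions σ := by
  rw [← swappedPair_mul_adj, swappedPair_mem_inversions_iff, swappedPair_mul_adj,
    swappedPair_mem_inversions_iff, not_lt]
  simp [adj, lt_iff_le_and_ne, (castSucc_lt_succ i).ne]

lemma inversions_subset_pairs (σ : Perm (Fin (m + 1))) : inversions σ ⊆ pairs (m + 1) :=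
  filter_subset _ _

/-- Two permutations that agree on the order of values at adjacent positions are equal. -/
lemma eq_of_forall_lt {σ τ : Perm (Fin (m + 1))}
    (h : ∀ i : Fin m, τ.symm (σ i.castSucc) < τ.symm (σ i.succ)) : σ = τ := by
  have hs : StrictMono (fun x => τ.symm (σ x)) := Fin.strictMono_iff_lt_succ.2 h
  have hid : (fun x => τ.symm (σ x)) = id := hs.range_inj strictMono_id |>.1 (by
    rw [Set.range_id]; exact (σ.trans τ.symm).surjective.range_eq)
  ext1 x
  exact (Equiv.symm_apply_eq _).1 (congrFun hid x)

lemma inversions_injective : Function.Injective (inversions (m := m)) := by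
  intro σ τ h
  refine eq_of_forall_lt fun i => ?_
  have h₁ := swappedPair_mem_inversions_iff σ i
  rw [h] at h₁
  simp only [inversions, mem_filter, swappedPair_mem_pairs, true_and] at h₁
  rcases lt_or_gt_of_ne (castSucc_ne_succ σ i) with hl | hl
  · simp only [swappedPair, hl.le, min_eq_left, max_eq_right, hl.not_gt, iff_false, not_lt] at h₁
    exact lt_of_le_of_ne h₁ (by simp [Fin.ext_iff])
  · simpa [swappedPair, hl.le, hl] using h₁

lemma inversions_mul_adj_eq_symmDiff (σ : Perm (Fin (m + 1))) (i : Fin m) :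
    inversions (σ * adj i) = symmDiff (inversions σ) {swappedPair σ i} := by
  ext p
  by_cases hp : p = swappedPair σ i
  · subst hp
    simp [swappedPair_mem_inversions_mul_adj, mem_symmDiff]
  · simp [mem_inversions_mul_adj hp, mem_symmDiff, hp]

lemma descent_of_card_inversions_le {σ : Perm (Fin (m + 1))} {i : Fin m}
    (h : (inversions (σ * adj i)).card ≤ (inversions σ).card) : σ i.succ < σ i.castSucc := by
  rw [← swappedPair_mem_inversions_iff]
  by_contra hn
  have hd : Disjoint (inversions σ) {swappedPair σ i} := by simpa using hn
  rw [inversions_mul_adj_eq_symmDiff, hd.symmDiff_eq_sup, sup_eq_union,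
    card_union_of_disjoint hd, card_singleton] at h
  omega

lemma lt_of_forall_succ_lt {f : Fin (m + 1) → Fin (m + 1)} (a b : Fin (m + 1)) (hab : a < b)
    (h : ∀ k : Fin m, a ≤ k.castSucc → k.castSucc < b → f k.succ < f k.castSucc) : f b < f a := by
  induction b using Fin.induction with
  | zero => simp at hab
  | succ k ih =>
    have hk : a ≤ k.castSucc := Fin.le_castSucc_iff.2 hab
    have hd := h k hk (castSucc_lt_succ k)
    rcases hk.eq_or_lt with rfl | hlt
    · exact hd
    · exact hd.trans (ih hlt fun j h₁ h₂ => h j h₁ (h₂.trans (castSucc_lt_succ k)))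

/-! ### Maximal chains as permutations -/

/-- The set of the first `i + 1` values of `σ`. -/
def prefixSet (σ : Perm (Fin (m + 1))) (i : Fin m) : Finset (Fin (m + 1)) :=
  univ.filter fun x => σ.symm x ≤ i.castSucc

lemma mem_prefixSet {σ : Perm (Fin (m + 1))} {i : Fin m} {x : Fin (m + 1)} :
    x ∈ prefixSet σ i ↔ σ.symm x ≤ i.castSucc := by
  simp [prefixSet]

lemma card_prefixSet (σ : Perm (Fin (m + 1))) (i : Fin m) : (prefixSet σ i).card = i + 1 := by
  have : prefixSet σ i = (Iic i.castSucc).map σ.toEmbedding := by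
    ext x
    simp [mem_prefixSet, Finset.mem_map_equiv]
  rw [this, card_map, Fin.card_Iic, Fin.val_castSucc]

lemma eq_of_prefixSet_eq {σ τ : Perm (Fin (m + 1))} {i j : Fin m}
    (h : prefixSet σ i = prefixSet τ j) : i = j := by
  have := congrArg card h
  rw [card_prefixSet, card_prefixSet] at this
  exact Fin.ext (by omega)

lemma prefixSet_injective (σ : Perm (Fin (m + 1))) : Function.Injective (prefixSet σ) :=
  fun _ _ => eq_of_prefixSet_eq

lemma prefixSet_mul_adj {σ : Perm (Fin (m + 1))} {i j : Fin m} (h : j ≠ i) :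
    prefixSet (σ * adj i) j = prefixSet σ j := by
  ext x
  rw [mem_prefixSet, mem_prefixSet, symm_mul_adj, adj_le_castSucc_iff h]

lemma lt_of_prefixSet_eq {σ τ : Perm (Fin (m + 1))} {j : Fin m}
    (h : prefixSet τ j = prefixSet σ j) : τ.symm (σ j.castSucc) < τ.symm (σ j.succ) := by
  have h₁ : σ j.castSucc ∈ prefixSet τ j := by simp [h, mem_prefixSet]
  have h₂ : σ j.succ ∉ prefixSet τ j := by simp [h, mem_prefixSet]
  rw [mem_prefixSet] at h₁ h₂
  exact h₁.trans_lt (not_le.1 h₂)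

lemma eq_or_eq_mul_adj {σ τ : Perm (Fin (m + 1))} {i : Fin m}
    (h : ∀ j ≠ i, prefixSet τ j = prefixSet σ j) : τ = σ ∨ τ = σ * adj i := by
  have hne : τ.symm (σ i.castSucc) ≠ τ.symm (σ i.succ) := by
    simpa using (castSucc_lt_succ i).ne
  rcases lt_or_gt_of_ne hne with hl | hl
  · left
    refine (eq_of_forall_lt fun j => ?_).symm
    by_cases hj : j = i
    · rwa [hj]
    · exact lt_of_prefixSet_eq (h j hj)
  · right
    refine (eq_of_forall_lt fun j => ?_).symm
    by_cases hj : j = i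
    · subst hj
      simpa [adj] using hl
    · exact lt_of_prefixSet_eq ((h j hj).trans (prefixSet_mul_adj hj).symm)

/-- If `τ` has the prefixes of `σ` outside the descents of `σ`, then it has no further inversions. -/
lemma inversions_subset_of_prefixSet_eq {σ τ : Perm (Fin (m + 1))}
    (h : ∀ k : Fin m, ¬ σ k.succ < σ k.castSucc → prefixSet τ k = prefixSet σ k) :
    inversions τ ⊆ inversions σ := by
  rintro ⟨x, y⟩ hxy
  simp only [inversions, pairs, mem_filter, mem_univ, true_and] at hxy ⊢
  refine ⟨hxy.1, ?_⟩
  by_contra hn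
  have hlt : σ.symm x < σ.symm y :=
    lt_of_le_of_ne (not_lt.1 hn) (by simpa using hxy.1.ne)
  have := lt_of_forall_succ_lt (f := σ) _ _ hlt fun k h₁ h₂ => by
    by_contra hd
    have hk := h k hd
    have hx : x ∈ prefixSet τ k := by rw [hk, mem_prefixSet]; exact h₁
    have hy : y ∈ prefixSet τ k := mem_prefixSet.2 (hxy.2.le.trans (mem_prefixSet.1 hx))
    rw [hk, mem_prefixSet] at hy
    exact h₂.not_ge hy
  simp only [apply_symm_apply] at this
  exact lt_asymm this hxy.1

/-- The maximal chain of prefixes of `σ`. -/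
def flag (σ : Perm (Fin (m + 1))) : Finset (Finset (Fin (m + 1))) := univ.image (prefixSet σ)

/-- The chain of prefixes of `σ` other than the `i`-th. -/
def ridge (σ : Perm (Fin (m + 1))) (i : Fin m) : Finset (Finset (Fin (m + 1))) :=
  (univ.erase i).image (prefixSet σ)

lemma card_flag (σ : Perm (Fin (m + 1))) : (flag σ).card = m := by
  rw [flag, card_image_of_injective _ (prefixSet_injective σ), card_univ, Fintype.card_fin]

lemma card_ridge (σ : Perm (Fin (m + 1))) (i : Fin m) : (ridge σ i).card = m - 1 := by
  rw [ridge, card_image_of_injective _ (prefixSet_injective σ), card_erase_of_mem (mem_univ _),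
    card_univ, Fintype.card_fin]

lemma flag_erase (σ : Perm (Fin (m + 1))) (i : Fin m) :
    (flag σ).erase (prefixSet σ i) = ridge σ i :=
  (image_erase (prefixSet_injective σ) _ _).symm

lemma ridge_subset_flag (σ : Perm (Fin (m + 1))) (i : Fin m) : ridge σ i ⊆ flag σ :=
  image_subset_image (erase_subset _ _)

lemma prefixSet_mem_flag_iff {σ τ : Perm (Fin (m + 1))} {i : Fin m} :
    prefixSet σ i ∈ flag τ ↔ prefixSet τ i = prefixSet σ i := by
  simp only [flag, mem_image, mem_univ, true_and]
  refine ⟨?_, fun h => ⟨i, h⟩⟩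
  rintro ⟨j, hj⟩
  rwa [eq_of_prefixSet_eq hj] at hj

lemma prefixSet_mem_ridge_iff {σ : Perm (Fin (m + 1))} {i j : Fin m} :
    prefixSet σ i ∈ ridge σ j ↔ i ≠ j := by
  simp [ridge, (prefixSet_injective σ).eq_iff]

lemma ridge_subset_flag_iff {σ τ : Perm (Fin (m + 1))} {i : Fin m} :
    ridge σ i ⊆ flag τ ↔ τ = σ ∨ τ = σ * adj i := by
  constructor
  · intro h
    exact eq_or_eq_mul_adj fun j hj =>
      prefixSet_mem_flag_iff.1 (h (prefixSet_mem_ridge_iff.2 hj))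
  · rintro (rfl | rfl) A hA
    · exact ridge_subset_flag _ _ hA
    · obtain ⟨j, hj, rfl⟩ := mem_image.1 hA
      exact prefixSet_mem_flag_iff.2 (prefixSet_mul_adj (ne_of_mem_erase hj))

lemma ridge_mul_adj (σ : Perm (Fin (m + 1))) (i : Fin m) : ridge (σ * adj i) i = ridge σ i :=
  image_congr fun _ hj => prefixSet_mul_adj (ne_of_mem_erase hj)

lemma eq_of_ridge_eq {σ τ : Perm (Fin (m + 1))} {i j : Fin m} (h : ridge σ i = ridge τ j) :
    i = j := by
  by_contra hne
  have hi : prefixSet τ i ∈ ridge σ i := h ▸ prefixSet_mem_ridge_iff.2 hne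
  obtain ⟨k, hk, hk'⟩ := mem_image.1 hi
  exact ne_of_mem_erase hk (eq_of_prefixSet_eq hk')

lemma ridge_eq_iff {σ τ : Perm (Fin (m + 1))} {i j : Fin m} :
    ridge τ j = ridge σ i ↔ j = i ∧ (τ = σ ∨ τ = σ * adj i) := by
  constructor
  · intro h
    exact ⟨eq_of_ridge_eq h, ridge_subset_flag_iff.1 (h ▸ ridge_subset_flag τ j)⟩
  · rintro ⟨rfl, rfl | rfl⟩
    · rfl
    · exact ridge_mul_adj _ _

lemma flag_injective : Function.Injective (flag (m := m)) := by
  intro σ τ h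
  exact eq_of_forall_lt fun i =>
    lt_of_prefixSet_eq (prefixSet_mem_flag_iff.1 (h ▸ mem_image_of_mem _ (mem_univ i)))

/-! ### The complex -/

lemma mem_sdBoundarySimplex {n : ℕ} {v : Finset (Finset (Fin n))} :
    v ∈ sdBoundarySimplex n ↔ v.Nonempty ∧ (∀ A ∈ v, A.Nonempty ∧ A ≠ univ) ∧
      ∀ A ∈ v, ∀ B ∈ v, A ⊆ B ∨ B ⊆ A := by
  simp [sdBoundarySimplex]

lemma mem_of_subset {n : ℕ} {v w : Finset (Finset (Fin n))} (hv : v ∈ sdBoundarySimplex n)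
    (hw : w ⊆ v) (hne : w.Nonempty) : w ∈ sdBoundarySimplex n := by
  rw [mem_sdBoundarySimplex] at hv ⊢
  exact ⟨hne, fun A hA => hv.2.1 A (hw hA), fun A hA B hB => hv.2.2 A (hw hA) B (hw hB)⟩

lemma flag_mem (hm : 0 < m) (σ : Perm (Fin (m + 1))) : flag σ ∈ sdBoundarySimplex (m + 1) := by
  rw [mem_sdBoundarySimplex]
  refine ⟨card_pos.1 (by rwa [card_flag]), ?_, ?_⟩
  · simp only [flag, mem_image, mem_univ, true_and, forall_exists_index, forall_apply_eq_imp_iff]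
    intro i
    have hc := card_prefixSet σ i
    refine ⟨card_pos.1 (by omega), fun h => ?_⟩
    rw [h, card_univ, Fintype.card_fin] at hc
    omega
  · simp only [flag, mem_image, mem_univ, true_and, forall_exists_index, forall_apply_eq_imp_iff]
    intro i j
    have hmono : ∀ {a b : Fin m}, a ≤ b → prefixSet σ a ⊆ prefixSet σ b := fun hab x hx =>
      mem_prefixSet.2 ((mem_prefixSet.1 hx).trans (Fin.castSucc_le_castSucc_iff.2 hab))
    exact (le_total i j).imp hmono hmono

lemma exists_eq_prefixSet {σ : Perm (Fin (m + 1))} {A : Finset (Fin (m + 1))} (hne : A.Nonempty)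
    (huniv : A ≠ univ) (h : ∀ x ∈ A, ∀ y ∉ A, σ.symm x < σ.symm y) :
    ∃ i, prefixSet σ i = A := by
  obtain ⟨x, hx, hmax⟩ := A.exists_max_image σ.symm hne
  obtain ⟨y, hy⟩ : ∃ y, y ∉ A := by
    by_contra! hall
    exact huniv (eq_univ_iff_forall.2 hall)
  have hlt : (σ.symm x : ℕ) < m := by
    have h₁ := Fin.lt_def.1 (h x hx y hy)
    have h₂ := (σ.symm y).isLt
    omega
  refine ⟨(σ.symm x).castLT hlt, ?_⟩
  ext z
  rw [mem_prefixSet, Fin.castSucc_castLT]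
  refine ⟨fun hz => ?_, hmax z⟩
  by_contra hzA
  exact (h x hx z hzA).not_ge hz

/-- Every face is contained in a maximal chain. -/
lemma exists_subset_flag {v : Finset (Finset (Fin (m + 1)))}
    (hv : v ∈ sdBoundarySimplex (m + 1)) : ∃ σ, v ⊆ flag σ := by
  rw [mem_sdBoundarySimplex] at hv
  obtain ⟨-, hv, hchain⟩ := hv
  let f : Fin (m + 1) → ℕ := fun x => (v.filter fun A => x ∉ A).card
  refine ⟨Tuple.sort f, fun A hA => ?_⟩
  obtain ⟨i, hi⟩ := exists_eq_prefixSet (σ := Tuple.sort f) (hv A hA).1 (hv A hA).2 fun x hx y hy => by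
    have hf : f x < f y := by
      refine card_lt_card (ssubset_iff_of_subset ?_ |>.2 ⟨A, by simp [hA, hy], by simp [hx]⟩)
      intro B hB
      rw [mem_filter] at hB ⊢
      refine ⟨hB.1, fun hyB => ?_⟩
      rcases hchain A hA B hB.1 with hs | hs
      · exact hB.2 (hs hx)
      · exact hy (hs hyB)
    by_contra hn
    have := Tuple.monotone_sort f (not_lt.1 hn)
    simp only [Function.comp_apply, apply_symm_apply] at this
    omega
  exact hi ▸ mem_image_of_mem _ (mem_univ i)

lemma faces_top (hm : 0 < m) (k : ℕ) (hk : k + 1 = m) :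
    faces (sdBoundarySimplex (m + 1)) k = univ.image flag := by
  ext v
  simp only [faces, mem_filter, mem_image, mem_univ, true_and]
  constructor
  · rintro ⟨hv, hc⟩
    obtain ⟨σ, hσ⟩ := exists_subset_flag hv
    exact ⟨σ, (eq_of_subset_of_card_le hσ (by rw [card_flag]; omega)).symm⟩
  · rintro ⟨σ, rfl⟩
    exact ⟨flag_mem hm σ, by rw [card_flag, hk]⟩

lemma ridge_mem_faces {k : ℕ} (hk : k + 2 = m) (σ : Perm (Fin (m + 1))) (i : Fin m) :
    ridge σ i ∈ faces (sdBoundarySimplex (m + 1)) k := by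
  have hc := card_ridge σ i
  rw [faces, mem_filter]
  exact ⟨mem_of_subset (flag_mem (by omega) σ) (ridge_subset_flag σ i)
    (card_pos.1 (by omega)), by omega⟩

lemma exists_eq_ridge {k : ℕ} (hk : k + 2 = m) {v : Finset (Finset (Fin (m + 1)))}
    (hv : v ∈ faces (sdBoundarySimplex (m + 1)) k) : ∃ σ i, ridge σ i = v := by
  rw [faces, mem_filter] at hv
  obtain ⟨σ, hσ⟩ := exists_subset_flag hv.1
  obtain ⟨A, hA, hAv⟩ := exists_mem_notMem_of_card_lt_card (s := v) (t := flag σ)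
    (by rw [card_flag]; omega)
  obtain ⟨i, -, rfl⟩ := mem_image.1 hA
  refine ⟨σ, i, (eq_of_subset_of_card_le ?_ ?_).symm⟩
  · rw [← flag_erase]
    exact subset_erase.2 ⟨hσ, hAv⟩
  · rw [card_ridge]; omega

/-! ### Coboundaries -/

section Coboundary

variable {V : Type*} [DecidableEq V]

/-- The coboundary as a sum over the faces obtained by deleting one vertex. -/
def pcob (φ : Finset V → ZMod 2) (τ : Finset V) : ZMod 2 := ∑ a ∈ τ, φ (τ.erase a)

lemma pcob_add (φ ψ : Finset V → ZMod 2) (τ : Finset V) :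
    pcob (fun σ => φ σ + ψ σ) τ = pcob φ τ + pcob ψ τ :=
  sum_add_distrib

lemma pcob_pcob (ψ : Finset V → ZMod 2) (τ : Finset V) : pcob (pcob ψ) τ = 0 := by
  unfold pcob
  rw [sum_sigma']
  refine sum_involution (fun p _ => ⟨p.2, p.1⟩) ?_ ?_ ?_ ?_
  · rintro ⟨a, b⟩ -
    simp only [erase_right_comm (a := b) (b := a)]
    exact CharTwo.add_self_eq_zero _
  · rintro ⟨a, b⟩ h - heq
    simp only [mem_sigma, mem_erase] at h
    exact h.2.1 (congrArg Sigma.fst heq)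
  · rintro ⟨a, b⟩ h
    simp only [mem_sigma, mem_erase] at h ⊢
    exact ⟨h.2.2, h.2.1.symm, h.1⟩
  · rintro ⟨a, b⟩ -
    rfl

lemma exists_erase_eq {σ τ : Finset V} (h : σ ⊆ τ) (hc : τ.card = σ.card + 1) :
    ∃ a ∈ τ, τ.erase a = σ := by
  obtain ⟨a, ha, haσ⟩ := exists_mem_notMem_of_card_lt_card (s := σ) (t := τ) (by omega)
  refine ⟨a, ha, (eq_of_subset_of_card_le (subset_erase.2 ⟨h, haσ⟩) ?_).symm⟩
  rw [card_erase_of_mem ha]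
  omega

lemma pcob_single {θ ρ : Finset V} (hc : ρ.card = θ.card + 1) :
    pcob (Pi.single θ 1) ρ = if θ ⊆ ρ then 1 else 0 := by
  unfold pcob
  split_ifs with h
  · obtain ⟨a, ha, rfl⟩ := exists_erase_eq h hc
    rw [sum_eq_single_of_mem a ha, Pi.single_eq_same]
    intro b hb hba
    exact Pi.single_eq_of_ne (fun h' => hba (erase_injOn _ hb ha h')) _
  · refine sum_eq_zero fun a _ => Pi.single_eq_of_ne ?_ _
    rintro rfl
    exact h (erase_subset _ _)

lemma cob_eq_pcob {X : Finset (Finset V)} {k : ℕ} (φ : Finset V → ZMod 2) {τ : Finset V}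
    (hX : ∀ σ ⊆ τ, σ.Nonempty → σ ∈ X) (hc : τ.card = k + 2) : cob X k φ τ = pcob φ τ := by
  have : (faces X k).filter (fun σ => σ ⊆ τ) = τ.image τ.erase := by
    ext σ
    simp only [faces, mem_filter, mem_image]
    constructor
    · rintro ⟨⟨-, hσ⟩, hs⟩
      exact exists_erase_eq hs (by omega)
    · rintro ⟨a, ha, rfl⟩
      have hca := card_erase_of_mem ha
      exact ⟨⟨hX _ (erase_subset _ _) (card_pos.1 (by omega)), by omega⟩, erase_subset _ _⟩
  rw [cob, this, sum_image (erase_injOn τ), pcob]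

lemma cnorm_add_le (X : Finset (Finset V)) (k : ℕ) (φ ψ : Finset V → ZMod 2) :
    cnorm X k (fun σ => φ σ + ψ σ) ≤ cnorm X k φ + cnorm X k ψ := by
  refine (card_le_card fun σ hσ => ?_).trans (card_union_le _ _)
  simp only [csupp, mem_filter, mem_union] at hσ ⊢
  by_contra! h
  exact hσ.2 (by rw [h.1 hσ.1, h.2 hσ.1, add_zero])

lemma cnorm_single_le (X : Finset (Finset V)) (k : ℕ) (ρ : Finset V) :
    cnorm X k (Pi.single ρ 1) ≤ 1 := by
  refine (card_le_card (t := {ρ}) fun σ hσ => ?_).trans (card_singleton ρ).le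
  rw [csupp, mem_filter] at hσ
  by_contra h
  exact hσ.2 (Pi.single_eq_of_ne (by simpa using h) _)

end Coboundary

lemma cnorm_congr {V : Type*} {X : Finset (Finset V)} {k : ℕ} {φ ψ : Finset V → ZMod 2}
    (h : ∀ σ ∈ faces X k, φ σ = ψ σ) : cnorm X k φ = cnorm X k ψ := by
  unfold cnorm csupp
  rw [filter_congr fun σ hσ => by rw [h σ hσ]]

/-- A cochain on the codimension-one faces. -/
abbrev Cochain (m : ℕ) := Finset (Finset (Fin (m + 1))) → ZMod 2

/-- The coboundary of a codimension-one cochain at the maximal chain of `σ`. -/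
def vcob (φ : Cochain m) (σ : Perm (Fin (m + 1))) : ZMod 2 := ∑ i, φ (ridge σ i)

lemma vcob_add (φ ψ : Cochain m) (σ : Perm (Fin (m + 1))) :
    vcob (fun ρ => φ ρ + ψ ρ) σ = vcob φ σ + vcob ψ σ :=
  sum_add_distrib

lemma vcob_eq_pcob (φ : Cochain m) (σ : Perm (Fin (m + 1))) : vcob φ σ = pcob φ (flag σ) := by
  unfold vcob pcob
  rw [flag, sum_image (prefixSet_injective σ).injOn]
  exact sum_congr rfl fun i _ => by rw [← flag, flag_erase]

lemma vcob_congr {φ ψ : Cochain m} (h : ∀ σ i, φ (ridge σ i) = ψ (ridge σ i))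
    (σ : Perm (Fin (m + 1))) : vcob φ σ = vcob ψ σ :=
  sum_congr rfl fun i _ => h σ i

lemma vcob_pcob (ψ : Cochain m) (σ : Perm (Fin (m + 1))) : vcob (pcob ψ) σ = 0 := by
  rw [vcob_eq_pcob, pcob_pcob]

lemma vcob_single (σ τ : Perm (Fin (m + 1))) (i : Fin m) :
    vcob (Pi.single (ridge σ i) 1) τ =
      (if τ = σ then 1 else 0) + (if τ = σ * adj i then 1 else 0) := by
  unfold vcob
  rw [sum_eq_single_of_mem i (mem_univ i)]
  · simp only [Pi.single_apply, ridge_eq_iff, true_and]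
    by_cases h₁ : τ = σ
    · subst h₁
      simp [(mul_adj_ne τ i).symm]
    · simp [h₁]
  · intro j _ hj
    exact Pi.single_eq_of_ne (fun h => hj (ridge_eq_iff.1 h).1) _

/-- A set of maximal chains that no face in the support of `φ` leaves meets the coboundary of `φ`
in an even number of elements. -/
lemma sum_vcob_eq_zero (φ : Cochain m) (C : Finset (Perm (Fin (m + 1))))
    (hC : ∀ σ ∈ C, ∀ i, φ (ridge σ i) ≠ 0 → σ * adj i ∈ C) : ∑ σ ∈ C, vcob φ σ = 0 := by
  unfold vcob
  rw [← sum_product', ← sum_filter_ne_zero]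
  refine sum_involution (fun p _ => (p.1 * adj p.2, p.2)) ?_ ?_ ?_ ?_
  · rintro ⟨σ, i⟩ -
    simp only [ridge_mul_adj]
    exact CharTwo.add_self_eq_zero _
  · rintro ⟨σ, i⟩ - - h
    exact mul_adj_ne σ i (congrArg Prod.fst h)
  · rintro ⟨σ, i⟩ h
    simp only [mem_filter, mem_product, mem_univ, and_true, ridge_mul_adj] at h ⊢
    exact ⟨hC σ h.1 i h.2, h.2⟩
  · rintro ⟨σ, i⟩ -
    simp only [mul_adj_mul_adj]

/-! ### Acyclicity in codimension one -/

/-- A weight on cochains dominated by the chains in the support with most inversions. -/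
def weight (z : Cochain m) : ℕ :=
  ∑ p : Perm (Fin (m + 1)) × Fin m, if z (ridge p.1 p.2) ≠ 0 then
    (Fintype.card (Perm (Fin (m + 1)) × Fin m) + 1) ^ (inversions p.1).card else 0

lemma prefixSet_eq_of_subset_flag {v τ : Perm (Fin (m + 1))} {i j k : Fin m}
    (h : (ridge v i).erase (prefixSet v j) ⊆ flag τ) (hi : k ≠ i) (hj : k ≠ j) :
    prefixSet τ k = prefixSet v k :=
  prefixSet_mem_flag_iff.1 (h (mem_erase.2
    ⟨(prefixSet_injective v).ne hj, prefixSet_mem_ridge_iff.2 hi⟩))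

lemma card_inversions_lt_of_subset_flag {v τ : Perm (Fin (m + 1))} {i j : Fin m}
    (hi : v i.succ < v i.castSucc) (hj : v j.succ < v j.castSucc)
    (h : (ridge v i).erase (prefixSet v j) ⊆ flag τ) (hne : τ ≠ v) :
    (inversions τ).card < (inversions v).card := by
  refine card_lt_card ((inversions_subset_of_prefixSet_eq fun k hk => ?_).ssubset_of_ne
    (inversions_injective.ne hne))
  refine prefixSet_eq_of_subset_flag h ?_ ?_ <;> rintro rfl <;> exact hk ‹_›

lemma weight_add_polygon_lt {z : Cochain m} {v : Perm (Fin (m + 1))} {i j : Fin m} (hij : i ≠ j)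
    (hzi : z (ridge v i) ≠ 0) (hzj : z (ridge v j) ≠ 0)
    (hi : v i.succ < v i.castSucc) (hj : v j.succ < v j.castSucc) :
    weight (fun ρ => z ρ + pcob (Pi.single ((ridge v i).erase (prefixSet v j)) 1) ρ) <
      weight z := by
  have hone : ∀ a : ZMod 2, a ≠ 0 → a + 1 = 0 := by decide
  set θ := (ridge v i).erase (prefixSet v j) with hθ
  have hcθ : ∀ (τ : Perm (Fin (m + 1))) (k : Fin m), (ridge τ k).card = θ.card + 1 := by
    intro τ k
    have hmem := prefixSet_mem_ridge_iff (σ := v).2 hij.symm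
    have := card_pos.2 ⟨_, hmem⟩
    rw [hθ, card_erase_of_mem hmem, Nat.sub_add_cancel this, card_ridge, card_ridge]
  have hθi : θ ⊆ ridge v i := erase_subset _ _
  have hθj : θ ⊆ ridge v j := by
    rw [hθ, ← flag_erase, ← flag_erase, erase_right_comm]
    exact erase_subset _ _
  set c := Fintype.card (Perm (Fin (m + 1)) × Fin m) with hc
  set h := (inversions v).card with hh
  have hpos : 0 < h := card_pos.2 ⟨_, (swappedPair_mem_inversions_iff v i).2 hi⟩
  have key : ∑ p : Perm (Fin (m + 1)) × Fin m,
      ((if z (ridge p.1 p.2) + pcob (Pi.single θ 1) (ridge p.1 p.2) ≠ 0 then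
        (c + 1) ^ (inversions p.1).card else 0) + if p = (v, i) then (c + 1) ^ h else 0) ≤
      ∑ p : Perm (Fin (m + 1)) × Fin m,
      ((if z (ridge p.1 p.2) ≠ 0 then (c + 1) ^ (inversions p.1).card else 0) +
        (c + 1) ^ (h - 1)) := by
    refine sum_le_sum ?_
    rintro ⟨τ, k⟩ -
    dsimp only
    rw [pcob_single (hcθ τ k)]
    by_cases hsub : θ ⊆ ridge τ k
    · by_cases hτ : τ = v
      · subst hτ
        have hk : k = i ∨ k = j := by
          by_contra! hk
          have : prefixSet τ k ∈ θ :=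
            mem_erase.2 ⟨(prefixSet_injective τ).ne hk.2, prefixSet_mem_ridge_iff.2 hk.1⟩
          exact prefixSet_mem_ridge_iff.1 (hsub this) rfl
        rcases hk with rfl | rfl
        · simp [hsub, hone _ hzi, hzi, ← hh]
        · simp [hsub, hone _ hzj, hij.symm]
      · have hlt : (inversions τ).card < h :=
          card_inversions_lt_of_subset_flag hi hj (hsub.trans (ridge_subset_flag τ k)) hτ
        have hle : (c + 1) ^ (inversions τ).card ≤ (c + 1) ^ (h - 1) :=
          Nat.pow_le_pow_right (by omega) (by omega)
        rw [if_neg (fun h' => hτ (congrArg Prod.fst h'))]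
        split_ifs <;> omega
    · have hne : ((τ, k) : Perm (Fin (m + 1)) × Fin m) ≠ (v, i) := by
        rintro ⟨⟩
        exact hsub hθi
      simp [hsub, hne]
  rw [sum_add_distrib, sum_add_distrib, sum_ite_eq' univ (v, i), if_pos (mem_univ _), sum_const,
    card_univ, ← hc, smul_eq_mul] at key
  have hpow : (c + 1) ^ h = c * (c + 1) ^ (h - 1) + (c + 1) ^ (h - 1) := by
    conv_lhs => rw [← Nat.sub_add_cancel hpos]
    ring
  have hpow' : 0 < (c + 1) ^ (h - 1) := by positivity
  simp only [weight, ← hc]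
  omega

/-- Every codimension-one cocycle is a coboundary. -/
lemma exists_pcob_eq (z : Cochain m) (hz : ∀ σ, vcob z σ = 0) :
    ∃ ψ : Cochain m, ∀ σ i, z (ridge σ i) = pcob ψ (ridge σ i) := by
  induction hw : weight z using Nat.strong_induction_on generalizing z with
  | _ w ih =>
    let T : Finset (Perm (Fin (m + 1))) := univ.filter fun σ => ∃ i, z (ridge σ i) ≠ 0
    rcases T.eq_empty_or_nonempty with hT | hT
    · refine ⟨0, fun σ i => ?_⟩
      have hσ : σ ∉ T := by simp [hT]
      simp only [T, mem_filter, mem_univ, true_and, not_exists, not_not] at hσ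
      simp [hσ i, pcob]
    · obtain ⟨v, hv, hmax⟩ := T.exists_max_image (fun σ => (inversions σ).card) hT
      have hdesc : ∀ i, z (ridge v i) ≠ 0 → v i.succ < v i.castSucc := fun i hi =>
        descent_of_card_inversions_le (hmax _ (by
          simp only [T, mem_filter, mem_univ, true_and]
          exact ⟨i, by rwa [ridge_mul_adj]⟩))
      obtain ⟨i, hi⟩ := (mem_filter.1 hv).2
      obtain ⟨j, hij, hj⟩ : ∃ j, i ≠ j ∧ z (ridge v j) ≠ 0 := by
        by_contra! hall
        have := hz v
        rw [vcob, sum_eq_single_of_mem i (mem_univ i) fun j _ hj => hall j hj.symm] at this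
        exact hi this
      obtain ⟨ψ, hψ⟩ := ih _ (hw ▸ weight_add_polygon_lt hij hi hj (hdesc i hi) (hdesc j hj)) _
        (fun σ => by rw [vcob_add, hz, vcob_pcob, add_zero]) rfl
      refine ⟨fun θ => ψ θ + (Pi.single ((ridge v i).erase (prefixSet v j)) 1 : Cochain m) θ,
        fun σ k => ?_⟩
      rw [pcob_add, ← hψ, add_assoc]
      simp [CharTwo.add_self_eq_zero]

/-! ### Joining maximal chains -/

lemma exists_vcob_eq_pair {k : ℕ} (σ τ : Perm (Fin (m + 1))) :
    ∃ J : Cochain m, cnorm (sdBoundarySimplex (m + 1)) k J ≤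
        (symmDiff (inversions σ) (inversions τ)).card ∧
      ∀ υ, vcob J υ = (if υ = σ then 1 else 0) + (if υ = τ then 1 else 0) := by
  induction hd : (symmDiff (inversions σ) (inversions τ)).card generalizing σ with
  | zero =>
    rw [card_eq_zero, ← Finset.bot_eq_empty, symmDiff_eq_bot] at hd
    obtain rfl := inversions_injective hd
    exact ⟨0, by simp [cnorm, csupp], fun υ => by simp [vcob, CharTwo.add_self_eq_zero]⟩
  | succ d ih =>
    have hne : σ ≠ τ := by
      rintro rfl
      simp at hd
    obtain ⟨i, hi⟩ : ∃ i : Fin m, ¬ τ.symm (σ i.castSucc) < τ.symm (σ i.succ) := by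
      by_contra! h
      exact hne (eq_of_forall_lt h)
    have hlt : τ.symm (σ i.succ) < τ.symm (σ i.castSucc) :=
      lt_of_le_of_ne (not_lt.1 hi) (by simpa using (castSucc_lt_succ i).ne')
    have hmem : swappedPair σ i ∈ symmDiff (inversions σ) (inversions τ) := by
      have hτ : swappedPair σ i ∈ inversions τ ↔ σ i.castSucc < σ i.succ := by
        simp only [inversions, mem_filter, swappedPair_mem_pairs, true_and]
        rcases lt_or_gt_of_ne (castSucc_ne_succ σ i) with h | h
        · simp [swappedPair, h.le, h, hlt]
        · simp [swappedPair, h.le, h.not_gt, hlt.le]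
      rw [mem_symmDiff, hτ, swappedPair_mem_inversions_iff]
      rcases lt_or_gt_of_ne (castSucc_ne_succ σ i) with h | h <;> simp [h, h.not_gt]
    obtain ⟨J, hJ, hJv⟩ := ih (σ * adj i) (by
      rw [inversions_mul_adj_eq_symmDiff, symmDiff_right_comm, symmDiff_comm,
        symmDiff_of_le (by simpa using hmem), card_sdiff_of_subset (by simpa using hmem), hd,
        card_singleton, Nat.add_sub_cancel])
    refine ⟨fun ρ => J ρ + (Pi.single (ridge σ i) 1 : Cochain m) ρ,
      (cnorm_add_le _ _ _ _).trans (add_le_add hJ (cnorm_single_le _ _ _)), fun υ => ?_⟩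
    rw [vcob_add, hJv, vcob_single]
    generalize (if υ = σ * adj i then 1 else 0 : ZMod 2) = a
    generalize (if υ = σ then 1 else 0 : ZMod 2) = b
    generalize (if υ = τ then 1 else 0 : ZMod 2) = c
    revert a b c
    decide

/-- The maximal chains on which the coboundary of `φ` does not vanish. -/
def oddFlags (φ : Cochain m) : Finset (Perm (Fin (m + 1))) := univ.filter fun σ => vcob φ σ ≠ 0

lemma exists_vcob_eq_of_cnorm_le {k : ℕ} (φ : Cochain m) :
    ∃ φ' : Cochain m, (∀ σ, vcob φ' σ = vcob φ σ) ∧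
      2 * cnorm (sdBoundarySimplex (m + 1)) k φ' ≤ (oddFlags φ).card * (pairs (m + 1)).card := by
  induction hc : (oddFlags φ).card using Nat.strong_induction_on generalizing φ with
  | _ c ih =>
    rcases (oddFlags φ).eq_empty_or_nonempty with hT | ⟨σ, hσ⟩
    · refine ⟨0, fun σ => ?_, by simp [cnorm, csupp]⟩
      have hσ : σ ∉ oddFlags φ := by simp [hT]
      simp only [oddFlags, mem_filter, mem_univ, true_and, not_not] at hσ
      rw [hσ]
      simp [vcob]
    · obtain ⟨τ, hτ, hne⟩ : ∃ τ ∈ oddFlags φ, τ ≠ σ := by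
        by_contra! hall
        have hsum := sum_vcob_eq_zero φ univ fun _ _ _ _ => mem_univ _
        rw [sum_eq_single_of_mem σ (mem_univ σ) fun τ _ hτ => by
          by_contra h
          exact hτ (hall τ (mem_filter.2 ⟨mem_univ _, h⟩))] at hsum
        exact (mem_filter.1 hσ).2 hsum
      obtain ⟨J, hJ, hJv⟩ := exists_vcob_eq_pair (k := k) σ τ
      have hJ' : cnorm (sdBoundarySimplex (m + 1)) k J ≤ (pairs (m + 1)).card :=
        hJ.trans (card_le_card (symmDiff_subset_union.trans
          (union_subset (inversions_subset_pairs σ) (inversions_subset_pairs τ))))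
      have hset : oddFlags (fun ρ => φ ρ + J ρ) = ((oddFlags φ).erase σ).erase τ := by
        have hone : ∀ a : ZMod 2, a ≠ 0 → a + 1 = 0 := by decide
        ext υ
        simp only [oddFlags, mem_filter, mem_univ, true_and, mem_erase, vcob_add, hJv] at hσ hτ ⊢
        by_cases h₁ : υ = σ
        · subst h₁
          simp [hone _ hσ, hne.symm]
        · by_cases h₂ : υ = τ
          · subst h₂
            simp [hone _ hτ, h₁]
          · simp [h₁, h₂]
      have hcard : (oddFlags (fun ρ => φ ρ + J ρ)).card + 2 = c := by
        have h₁ := card_erase_add_one hσ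
        have h₂ := card_erase_add_one (mem_erase.2 ⟨hne, hτ⟩)
        rw [hset]
        omega
      obtain ⟨φ', hφ', hn⟩ := ih _ (by omega) (fun ρ => φ ρ + J ρ) rfl
      refine ⟨fun ρ => φ' ρ + J ρ, fun υ => ?_, ?_⟩
      · rw [vcob_add, hφ', vcob_add, add_assoc, CharTwo.add_self_eq_zero, add_zero]
      · have hadd := cnorm_add_le (sdBoundarySimplex (m + 1)) k φ' J
        rw [← hcard, add_mul]
        omega

lemma swappedPair_eq_of_ridge_eq {σ τ : Perm (Fin (m + 1))} {i j : Fin m}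
    (h : ridge τ j = ridge σ i) : swappedPair τ j = swappedPair σ i := by
  obtain ⟨rfl, rfl | rfl⟩ := ridge_eq_iff.1 h
  · rfl
  · exact swappedPair_mul_adj _ _

/-- A cochain joining the two opposite maximal chains has every pair swapped by some face of its
support. -/
lemma card_pairs_le_cnorm {k : ℕ} (hk : k + 2 = m) (φ : Cochain m)
    (hφ : ∀ υ, vcob φ υ = (if υ = 1 then 1 else 0) + (if υ = Fin.revPerm then 1 else 0)) :
    (pairs (m + 1)).card ≤ cnorm (sdBoundarySimplex (m + 1)) k φ := by
  refine card_le_card_of_forall_subsingleton (fun p ρ => ∃ σ i, ρ = ridge σ i ∧ p = swappedPair σ i)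
    (fun p hp => ?_) ?_
  · have hlt : p.1 < p.2 := (mem_filter.1 hp).2
    by_contra! hnone
    have hsum := sum_vcob_eq_zero φ (univ.filter fun σ => p ∈ inversions σ) fun σ hσ i hi => by
      simp only [mem_filter, mem_univ, true_and] at hσ ⊢
      rw [mem_inversions_mul_adj]
      · exact hσ
      · exact hnone (ridge σ i) (mem_filter.2 ⟨ridge_mem_faces hk σ i, hi⟩) σ i rfl
    have h₁ : p ∉ inversions (1 : Perm (Fin (m + 1))) := fun h => hlt.not_gt (mem_filter.1 h).2
    have h₂ : p ∈ inversions (Fin.revPerm : Perm (Fin (m + 1))) := by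
      simp [inversions, hlt, hp]
    simp [hφ, sum_add_distrib, h₁, h₂] at hsum
  · rintro ρ - p ⟨-, σ, i, rfl, rfl⟩ q ⟨-, τ, j, h, rfl⟩
    exact swappedPair_eq_of_ridge_eq h

/-! ### The cosystolic norm -/

lemma cob_ridge {k : ℕ} (hk : k + 2 = m) (hk0 : k ≠ 0) (ψ : Cochain m) (σ : Perm (Fin (m + 1)))
    (i : Fin m) : cob (sdBoundarySimplex (m + 1)) (k - 1) ψ (ridge σ i) = pcob ψ (ridge σ i) :=
  cob_eq_pcob ψ (fun _ h hne => mem_of_subset (flag_mem (by omega) σ)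
    (h.trans (ridge_subset_flag σ i)) hne) (by rw [card_ridge]; omega)

lemma exists_cosys_eq_cnorm {k : ℕ} (hk : k + 2 = m) (φ : Cochain m) :
    ∃ φ' : Cochain m, cosys (sdBoundarySimplex (m + 1)) k φ =
      cnorm (sdBoundarySimplex (m + 1)) k φ' ∧ ∀ σ, vcob φ' σ = vcob φ σ := by
  unfold cosys
  split_ifs with h0
  · subst h0
    rcases min_choice (cnorm (sdBoundarySimplex (m + 1)) 0 φ)
      (cnorm (sdBoundarySimplex (m + 1)) 0 fun σ => 1 + φ σ) with h | h
    · exact ⟨φ, h, fun _ => rfl⟩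
    · refine ⟨_, h, fun σ => ?_⟩
      subst hk
      rw [vcob_add, vcob]
      simp [CharTwo.two_eq_zero]
  · obtain ⟨ψ, hψ⟩ := Nat.sInf_mem (s := {c | ∃ ψ : Cochain m, c =
      cnorm (sdBoundarySimplex (m + 1)) k fun τ => φ τ + cob (sdBoundarySimplex (m + 1)) (k - 1) ψ τ})
      ⟨_, 0, rfl⟩
    refine ⟨_, hψ, fun σ => ?_⟩
    rw [vcob_add, vcob_congr (cob_ridge hk h0 ψ), vcob_pcob, add_zero]

lemma cosys_le_cnorm {k : ℕ} (hk : k + 2 = m) {φ φ' : Cochain m}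
    (h : ∀ σ, vcob φ' σ = vcob φ σ) : cosys (sdBoundarySimplex (m + 1)) k φ ≤
      cnorm (sdBoundarySimplex (m + 1)) k φ' := by
  obtain ⟨ψ, hψ⟩ := exists_pcob_eq (fun ρ => φ ρ + φ' ρ) fun σ => by
    rw [vcob_add, h, CharTwo.add_self_eq_zero]
  have hφ' : ∀ σ i, φ' (ridge σ i) = φ (ridge σ i) + pcob ψ (ridge σ i) := fun σ i => by
    rw [← hψ, ← add_assoc, CharTwo.add_self_eq_zero, zero_add]
  unfold cosys
  split_ifs with h0
  · have hconst : ∀ σ i, pcob ψ (ridge σ i) = ψ ∅ := fun σ i => by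
      obtain ⟨A, hA⟩ := card_eq_one.1 (show (ridge σ i).card = 1 by rw [card_ridge]; omega)
      simp [hA, pcob]
    subst h0
    have hcases : ∀ a : ZMod 2, a = 0 ∨ a = 1 := by decide
    rcases hcases (ψ ∅) with hψ0 | hψ0
    · refine min_le_of_left_le (cnorm_congr fun ρ hρ => ?_).le
      obtain ⟨σ, i, rfl⟩ := exists_eq_ridge hk hρ
      rw [hφ', hconst, hψ0, add_zero]
    · refine min_le_of_right_le (cnorm_congr fun ρ hρ => ?_).le
      obtain ⟨σ, i, rfl⟩ := exists_eq_ridge hk hρ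
      rw [hφ', hconst, hψ0, add_comm]
  · refine Nat.sInf_le ⟨ψ, cnorm_congr fun ρ hρ => ?_⟩
    obtain ⟨σ, i, rfl⟩ := exists_eq_ridge hk hρ
    rw [hφ', cob_ridge hk h0]

lemma cnorm_cob {k : ℕ} (hk : k + 2 = m) (φ : Cochain m) :
    cnorm (sdBoundarySimplex (m + 1)) (k + 1) (cob (sdBoundarySimplex (m + 1)) k φ) =
      (oddFlags φ).card := by
  rw [cnorm, csupp, faces_top (by omega) (k + 1) hk, filter_image,
    card_image_of_injective _ flag_injective, oddFlags]
  congr 1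
  refine filter_congr fun σ _ => ?_
  rw [vcob_eq_pcob, cob_eq_pcob φ (fun _ h hne => mem_of_subset (flag_mem (by omega) σ) h hne)
    (by rw [card_flag, hk])]

/-- The Cheeger constant in terms of the number of pairs. -/
lemma cheeger_eq {k : ℕ} (hk : k + 2 = m) : cheeger (sdBoundarySimplex (m + 1)) k =
    2 / ((pairs (m + 1)).card : ENNReal) := by
  have hpos : 0 < (pairs (m + 1)).card := by
    have := two_mul_card_pairs (m + 1)
    have : 0 < (m + 1) * (m + 1 - 1) := Nat.mul_pos (by omega) (by omega)
    omega
  apply le_antisymm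
  · obtain ⟨φ, -, hφ⟩ := exists_vcob_eq_pair (k := k) (1 : Perm (Fin (m + 1))) Fin.revPerm
    have hcos : (pairs (m + 1)).card ≤ cosys (sdBoundarySimplex (m + 1)) k φ := by
      obtain ⟨φ', hφ', hv⟩ := exists_cosys_eq_cnorm hk φ
      rw [hφ']
      exact card_pairs_le_cnorm hk φ' fun υ => (hv υ).trans (hφ υ)
    have hodd : (oddFlags φ).card ≤ 2 := by
      refine (card_le_card (t := {1, Fin.revPerm}) fun υ hυ => ?_).trans card_le_two
      simp only [oddFlags, mem_filter, hφ] at hυ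
      by_contra hn
      simp only [mem_insert, mem_singleton, not_or] at hn
      simp [hn.1, hn.2] at hυ
    refine (sInf_le (by exact ⟨φ, hpos.trans_le hcos, rfl⟩)).trans ?_
    rw [cnorm_cob hk]
    exact ENNReal.div_le_div (by exact_mod_cast hodd) (by exact_mod_cast hcos)
  · refine le_sInf ?_
    rintro _ ⟨φ, hφ, rfl⟩
    obtain ⟨φ', hφ', hn⟩ := exists_vcob_eq_of_cnorm_le (k := k) φ
    have hle := cosys_le_cnorm hk hφ'
    rw [cnorm_cob hk, ENNReal.le_div_iff_mul_le (by simp [hφ.ne']) (by simp), mul_comm,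
      ← mul_div_assoc, ENNReal.div_le_iff (by simp [hpos.ne']) (by simp)]
    have : cosys (sdBoundarySimplex (m + 1)) k φ * 2 ≤
      (oddFlags φ).card * (pairs (m + 1)).card := by omega
    exact_mod_cast this

end SdBoundary

/-- The `(n-3)`-rd Cheeger constant of the barycentric subdivision of the boundary of the
`(n-1)`-simplex equals `4 / (n(n-1))`. -/
theorem cheeger_sd_boundary_simplex (n : ℕ) (hn : 3 ≤ n) :
    cheeger (sdBoundarySimplex n) (n - 3) =
      4 / ((n : ENNReal) * ((n : ENNReal) - 1)) := by
  obtain ⟨m, rfl⟩ : ∃ m, n = m + 1 := ⟨n - 1, by omega⟩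
  rw [SdBoundary.cheeger_eq (show m + 1 - 3 + 2 = m by omega)]
  have hcard : ((m + 1 : ℕ) : ENNReal) * (((m + 1 : ℕ) : ENNReal) - 1) =
      2 * ((SdBoundary.pairs (m + 1)).card : ENNReal) := by
    have h := SdBoundary.two_mul_card_pairs (m + 1)
    have hsub : ((m + 1 : ℕ) : ENNReal) - 1 = (m : ENNReal) := by
      simp
    rw [Nat.add_sub_cancel] at h
    rw [hsub]
    exact_mod_cast h.symm
  rw [hcard, show (4 : ENNReal) = 2 * 2 by norm_num,
    ENNReal.mul_div_mul_left _ _ (by norm_num) (by norm_num)]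
end

section
/- Expansion of homogeneous geometric lattices: Let n ≥ 3 and let L be a finite lattice with a rank function rk such that rk(⊥) = 0, rk(y) = rk(x) + 1 whenever y covers x, rk(⊤) = n, rk(x) + rk(y) ≥ rk(x∨y) + rk(x∧y) for all x, y ∈ L, and every element of L is a join of atoms (i.e., L is a geometric lattice of rank n). Let L̄ = L ∖ {⊥, ⊤} and let Δ(L̄) be the order complex of L̄. Assume L is homogeneous: the group of lattice automorphisms of L acts transitively on the set of maximal chains of L̄ (the chains with n−1 elements, i.e., the (n−2)-dimensional faces of Δ(L̄)). Then h^{n−3}(Δ(L̄)) ≥ f_{n−2}(Δ(L̄)) / ( f_{n−3}(Δ(L̄)) · Σ_{j=1}^{n−1} j! ). -/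
open Finset

lemma sum_map_finset_sum {ι α : Type*} (f : α → ZMod 2) (s : Finset ι)
    (g : ι → Multiset α) :
    ((∑ i ∈ s, g i).map f).sum = ∑ i ∈ s, ((g i).map f).sum := by
  classical
  induction s using Finset.induction_on with
  | empty => simp
  | insert a s ha ih => simp [Finset.sum_insert ha, ih]

lemma sum_map_sum_comm {ι α : Type*} (s : Finset ι) (t : Multiset α) (g : ι → α → ZMod 2) :
    ∑ i ∈ s, (t.map (g i)).sum = (t.map fun x => ∑ i ∈ s, g i x).sum := by
  induction t using Multiset.induction_on with
  | empty => simp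
  | cons a t ih => simp [Finset.sum_add_distrib, ih]

section FormalChains

variable {V : Type*} [DecidableEq V]

/-- The coboundary of a `ZMod 2`-valued function on multisets, thought of as simplices with
possibly repeated vertices. -/
def multisetCob (f : Multiset V → ZMod 2) (M : Multiset V) : ZMod 2 :=
  (M.map fun x => f (M.erase x)).sum

/-- A cochain, extended by zero to the simplices with a repeated vertex. -/
def extendCochain (φ : Finset V → ZMod 2) (M : Multiset V) : ZMod 2 :=
  if M.Nodup then φ M.toFinset else 0

lemma extendCochain_val (φ : Finset V → ZMod 2) (s : Finset V) :
    extendCochain φ s.val = φ s := by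
  simp [extendCochain, s.nodup]

lemma multisetCob_extendCochain_val (φ : Finset V → ZMod 2) (s : Finset V) :
    multisetCob (extendCochain φ) s.val = ∑ x ∈ s, φ (s.erase x) := by
  unfold multisetCob
  rw [Finset.sum]
  congr 1
  refine Multiset.map_congr rfl fun x _ => ?_
  rw [← Finset.erase_val, extendCochain_val]

lemma multisetCob_extendCochain_eq_zero (φ : Finset V → ZMod 2) {M : Multiset V}
    (hM : ¬ M.Nodup) : multisetCob (extendCochain φ) M = 0 := by
  rw [Multiset.nodup_iff_count_le_one] at hM
  push Not at hM
  obtain ⟨x, hx⟩ := hM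
  obtain ⟨N, rfl⟩ : ∃ N, M = x ::ₘ x ::ₘ N := by
    obtain ⟨N, rfl⟩ := Multiset.exists_cons_of_mem (Multiset.count_pos.1 (by omega : 0 < M.count x))
    rw [Multiset.count_cons_self] at hx
    obtain ⟨N, rfl⟩ := Multiset.exists_cons_of_mem (Multiset.count_pos.1 (by omega : 0 < N.count x))
    exact ⟨N, rfl⟩
  unfold multisetCob
  have hN : (N.map fun y => extendCochain φ ((x ::ₘ x ::ₘ N).erase y)).sum = 0 := by
    refine Multiset.sum_eq_zero fun z hz => ?_
    obtain ⟨y, hy, rfl⟩ := Multiset.mem_map.1 hz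
    obtain ⟨N, rfl⟩ := Multiset.exists_cons_of_mem hy
    have : (x ::ₘ x ::ₘ y ::ₘ N).erase y = x ::ₘ x ::ₘ N := by
      rw [Multiset.cons_swap x y, Multiset.cons_swap x y, Multiset.erase_cons_head]
    simp [this, extendCochain]
  simp only [Multiset.map_cons, Multiset.sum_cons, hN, Multiset.erase_cons_head, add_zero]
  exact CharTwo.add_self_eq_zero _

/-- A sum over ordered pairs of distinct elements of a symmetric function vanishes mod 2. -/
lemma sum_sum_erase_eq_zero (s : Finset V) (g : V → V → ZMod 2) (hg : ∀ x y, g x y = g y x) :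
    ∑ x ∈ s, ∑ y ∈ s.erase x, g x y = 0 := by
  induction s using Finset.induction_on with
  | empty => simp
  | insert a s ha ih =>
    rw [Finset.sum_insert ha, Finset.erase_insert ha]
    have : ∀ x ∈ s, ∑ y ∈ (insert a s).erase x, g x y = g a x + ∑ y ∈ s.erase x, g x y := by
      intro x hx
      have hax : a ≠ x := fun h => ha (h ▸ hx)
      rw [Finset.erase_insert_of_ne hax, Finset.sum_insert (by simp [ha]), hg]
    rw [Finset.sum_congr rfl this, Finset.sum_add_distrib, ih, add_zero]
    exact CharTwo.add_self_eq_zero _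

end FormalChains

section Flags

variable {L : Type*} [DecidableEq L] [Lattice L] [BoundedOrder L]

/-- The simplices of the join of `t` with the barycentric subdivision of the simplex whose
vertices `b y` are indexed by `y ∈ J`; a face of the latter is represented by the join of its
vertices. -/
def flags (b : L → L) (J : Finset L) (t : Multiset L) : Multiset (Multiset L) :=
  if J = ∅ then {t} else ∑ y ∈ J.attach, flags b (J.erase y) (J.sup b ::ₘ t)
termination_by J.card
decreasing_by exact Finset.card_erase_lt_of_mem y.2

lemma flags_empty (b : L → L) (t : Multiset L) : flags b ∅ t = {t} := by
  rw [flags]; simp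

lemma flags_of_nonempty (b : L → L) {J : Finset L} (hJ : J.Nonempty) (t : Multiset L) :
    flags b J t = ∑ y ∈ J, flags b (J.erase y) (J.sup b ::ₘ t) := by
  rw [flags, if_neg hJ.ne_empty, Finset.sum_attach J fun y => flags b (J.erase y) (J.sup b ::ₘ t)]

lemma card_flags (b : L → L) (J : Finset L) (t : Multiset L) :
    (flags b J t).card = J.card.factorial := by
  induction h : J.card generalizing J t with
  | zero => rw [Finset.card_eq_zero.1 h, flags_empty]; simp
  | succ m ih =>
    rw [flags_of_nonempty b (Finset.card_pos.1 (by omega)), Multiset.card_sum,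
      Finset.sum_congr rfl fun y hy => ih (J.erase y) _ (by rw [Finset.card_erase_of_mem hy, h]; rfl)]
    simp [h, Nat.factorial_succ]

/-- Evaluation of a function on the chain `flags b J t`. -/
def flagSum (b : L → L) (f : Multiset L → ZMod 2) (J : Finset L) (t : Multiset L) : ZMod 2 :=
  ((flags b J t).map f).sum

lemma flagSum_empty (b : L → L) (f : Multiset L → ZMod 2) (t : Multiset L) :
    flagSum b f ∅ t = f t := by
  simp [flagSum, flags_empty]

lemma flagSum_of_nonempty (b : L → L) (f : Multiset L → ZMod 2) {J : Finset L}
    (hJ : J.Nonempty) (t : Multiset L) :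
    flagSum b f J t = ∑ y ∈ J, flagSum b f (J.erase y) (J.sup b ::ₘ t) := by
  simp only [flagSum]
  rw [flags_of_nonempty b hJ, sum_map_finset_sum]

/-- The subdivision operator is a chain map. -/
lemma flagSum_multisetCob (b : L → L) (f : Multiset L → ZMod 2) (J : Finset L)
    (t : Multiset L) :
    flagSum b (multisetCob f) J t =
      ∑ y ∈ J, flagSum b f (J.erase y) t + (t.map fun x => flagSum b f J (t.erase x)).sum := by
  induction h : J.card generalizing J t with
  | zero => simp [Finset.card_eq_zero.1 h, flagSum_empty, multisetCob]
  | succ m ih =>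
    have hJ : J.Nonempty := Finset.card_pos.1 (by omega)
    rw [flagSum_of_nonempty b _ hJ, Finset.sum_congr rfl fun y hy =>
      ih (J.erase y) _ (by rw [Finset.card_erase_of_mem hy, h]; rfl), Finset.sum_add_distrib,
      sum_sum_erase_eq_zero J
        (fun x y => flagSum b f ((J.erase x).erase y) (J.sup b ::ₘ t))
        (fun x y => by rw [Finset.erase_right_comm]), zero_add]
    simp only [Multiset.map_cons, Multiset.sum_cons, Multiset.erase_cons_head,
      Finset.sum_add_distrib]
    congr 1
    rw [sum_map_sum_comm]
    congr 1
    refine Multiset.map_congr rfl fun x hx => ?_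
    rw [flagSum_of_nonempty b _ hJ]
    refine Finset.sum_congr rfl fun y _ => ?_
    rw [Multiset.erase_cons_tail_of_mem hx]

/-- The simplices occurring in `flags b J t` are chains of proper elements when `t` is a chain
above the vertices indexed by `J`. -/
lemma flags_spec (b : L → L) (J : Finset L) (t : Multiset L)
    (hbot : ∀ y ∈ J, b y ≠ ⊥) (htop : J.sup b ≠ ⊤) (hle : ∀ x ∈ t, J.sup b ≤ x)
    (hproper : ∀ x ∈ t, x ≠ ⊥ ∧ x ≠ ⊤) (hchain : ∀ x ∈ t, ∀ y ∈ t, x ≤ y ∨ y ≤ x) :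
    ∀ M ∈ flags b J t, M.card = J.card + t.card ∧
      (∀ x ∈ M, x ≠ ⊥ ∧ x ≠ ⊤) ∧ ∀ x ∈ M, ∀ y ∈ M, x ≤ y ∨ y ≤ x := by
  induction h : J.card generalizing J t with
  | zero =>
    rw [Finset.card_eq_zero.1 h, flags_empty]
    intro M hM
    rw [Multiset.mem_singleton.1 hM]
    exact ⟨by simp, hproper, hchain⟩
  | succ m ih =>
    have hJ : J.Nonempty := Finset.card_pos.1 (by omega)
    intro M hM
    rw [flags_of_nonempty b hJ, Multiset.mem_sum] at hM
    obtain ⟨y, hy, hM⟩ := hM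
    have hsub : (J.erase y).sup b ≤ J.sup b := Finset.sup_mono (Finset.erase_subset _ _)
    have hJbot : J.sup b ≠ ⊥ := fun h0 =>
      hbot y hy (le_bot_iff.1 (h0 ▸ Finset.le_sup (f := b) hy))
    have := ih (J.erase y) (J.sup b ::ₘ t) (fun z hz => hbot z (Finset.mem_of_mem_erase hz))
      (fun h0 => htop (top_le_iff.1 (h0 ▸ hsub)))
      (fun x hx => by
        rcases Multiset.mem_cons.1 hx with rfl | hx
        · exact hsub
        · exact hsub.trans (hle x hx))
      (fun x hx => by
        rcases Multiset.mem_cons.1 hx with rfl | hx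
        · exact ⟨hJbot, htop⟩
        · exact hproper x hx)
      (fun x hx z hz => by
        rcases Multiset.mem_cons.1 hx with rfl | hx <;> rcases Multiset.mem_cons.1 hz with rfl | hz
        · exact Or.inl le_rfl
        · exact Or.inl (hle z hz)
        · exact Or.inr (hle x hx)
        · exact hchain x hx z hz)
      (by rw [Finset.card_erase_of_mem hy, h]; rfl) M hM
    refine ⟨?_, this.2⟩
    rw [this.1, Multiset.card_cons]; ring

end Flags

section Cone

variable {L : Type*} [DecidableEq L]

/-- Induction on a finite chain by adding elements on top. -/
@[elab_as_elim]
lemma chain_induction_on_max [PartialOrder L] {p : Finset L → Prop} (s : Finset L)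
    (hs : ∀ a ∈ s, ∀ b ∈ s, a ≤ b ∨ b ≤ a) (empty : p ∅)
    (insert_max : ∀ a s, (∀ x ∈ s, x < a) → (∀ a ∈ s, ∀ b ∈ s, a ≤ b ∨ b ≤ a) →
      p s → p (insert a s)) : p s := by
  induction h : s.card generalizing s with
  | zero => rwa [Finset.card_eq_zero.1 h]
  | succ m ih =>
    obtain ⟨a, ha⟩ := s.exists_maximal (Finset.card_pos.1 (by omega))
    have hs' : ∀ x ∈ s.erase a, ∀ y ∈ s.erase a, x ≤ y ∨ y ≤ x := fun x hx y hy =>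
      hs x (Finset.mem_of_mem_erase hx) y (Finset.mem_of_mem_erase hy)
    rw [← Finset.insert_erase ha.1]
    refine insert_max a _ (fun x hx => ?_) hs'
      (ih _ hs' (by rw [Finset.card_erase_of_mem ha.1, h]; rfl))
    obtain ⟨hxa, hx⟩ := Finset.mem_erase.1 hx
    refine lt_of_le_of_ne ?_ hxa
    rcases hs x hx a ha.1 with h | h
    · exact h
    · exact ha.2 hx h

/-- Sums over all the cuts of a chain, mod 2, telescope. -/
lemma sum_cuts [PartialOrder L] [DecidableLE L] (s : Finset L)
    (hs : ∀ a ∈ s, ∀ b ∈ s, a ≤ b ∨ b ≤ a) (K : Finset L → Finset L → ZMod 2) :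
    ∑ y ∈ s, (K ((s.filter (· ≤ y)).erase y) (s.filter (y ≤ ·)) +
      K (s.filter (· ≤ y)) ((s.filter (y ≤ ·)).erase y)) = K ∅ s + K s ∅ := by
  revert K
  refine chain_induction_on_max s hs (fun K => ?_) fun a s ha _ ih K => ?_
  · simpa using (CharTwo.add_self_eq_zero _).symm
  have has : a ∉ s := fun h => (ha a h).false
  rw [Finset.sum_insert has]
  have h1 : (insert a s).filter (· ≤ a) = insert a s :=
    Finset.filter_true_of_mem fun x hx => by
      rcases Finset.mem_insert.1 hx with rfl | hx
      · exact le_rfl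
      · exact (ha x hx).le
  have h2 : (insert a s).filter (a ≤ ·) = {a} := by
    ext x
    simp only [Finset.mem_filter, Finset.mem_insert, Finset.mem_singleton]
    constructor
    · rintro ⟨rfl | hx, h⟩
      · rfl
      · exact absurd h (ha x hx).not_ge
    · rintro rfl
      exact ⟨Or.inl rfl, le_rfl⟩
  have h3 : ∀ y ∈ s, (insert a s).filter (· ≤ y) = s.filter (· ≤ y) := fun y hy => by
    rw [Finset.filter_insert, if_neg (ha y hy).not_ge]
  have h4 : ∀ y ∈ s, (insert a s).filter (y ≤ ·) = insert a (s.filter (y ≤ ·)) := fun y hy => by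
    rw [Finset.filter_insert, if_pos (ha y hy).le]
  rw [h1, h2, Finset.erase_insert has]
  have := ih fun A B => K A (insert a B)
  rw [Finset.sum_congr rfl (g := fun y =>
    K ((s.filter (· ≤ y)).erase y) (insert a (s.filter (y ≤ ·))) +
    K (s.filter (· ≤ y)) (insert a ((s.filter (y ≤ ·)).erase y))), this]
  · have h5 := CharTwo.add_self_eq_zero (K s {a})
    simp only [Finset.erase_singleton, insert_empty_eq]
    linear_combination h5
  · intro y hy
    rw [h3 y hy, h4 y hy, Finset.erase_insert_of_ne (by rintro rfl; exact has hy)]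

lemma sum_factorial_card_filter_le [PartialOrder L] [DecidableLE L] (s : Finset L)
    (hs : ∀ a ∈ s, ∀ b ∈ s, a ≤ b ∨ b ≤ a) :
    ∑ y ∈ s, (s.filter (· ≤ y)).card.factorial = ∑ j ∈ Finset.Icc 1 s.card, j.factorial := by
  refine chain_induction_on_max s hs (by simp) fun a s ha _ ih => ?_
  have has : a ∉ s := fun h => (ha a h).false
  have h1 : (insert a s).filter (· ≤ a) = insert a s :=
    Finset.filter_true_of_mem fun x hx => by
      rcases Finset.mem_insert.1 hx with rfl | hx
      · exact le_rfl
      · exact (ha x hx).le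
  rw [Finset.sum_insert has, h1, Finset.card_insert_of_notMem has,
    Finset.sum_Icc_succ_top (by omega), ← ih, add_comm]
  congr 1
  refine Finset.sum_congr rfl fun y hy => ?_
  rw [Finset.filter_insert, if_neg (ha y hy).not_ge]

lemma isChain_insert_top [Lattice L] [BoundedOrder L] {σ : Finset L}
    (hσ : ∀ a ∈ σ, ∀ b ∈ σ, a ≤ b ∨ b ≤ a) :
    ∀ a ∈ insert ⊤ σ, ∀ b ∈ insert ⊤ σ, a ≤ b ∨ b ≤ a := by
  intro a ha b hb
  rcases Finset.mem_insert.1 ha with rfl | ha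
  · exact Or.inr le_top
  rcases Finset.mem_insert.1 hb with rfl | hb
  · exact Or.inl le_top
  exact hσ a ha b hb

variable [Lattice L] [BoundedOrder L] [DecidableLE L]

/-- The chain filling `σ` and the fillings of its faces: it interpolates between `σ` and the
subdivided cone with apex `b ⊤` over the simplex spanned by the vertices `b x`, `x ∈ σ`. -/
def coneChain (b : L → L) (σ : Finset L) : Multiset (Multiset L) :=
  ∑ y ∈ insert ⊤ σ, flags b ((insert ⊤ σ).filter (· ≤ y)) (σ.filter (y ≤ ·)).val

/-- Evaluation of a function on `coneChain b σ`. -/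
def coneSum (b : L → L) (f : Multiset L → ZMod 2) (σ : Finset L) : ZMod 2 :=
  ((coneChain b σ).map f).sum

lemma coneSum_eq (b : L → L) (f : Multiset L → ZMod 2) (σ : Finset L) :
    coneSum b f σ = ∑ y ∈ insert ⊤ σ,
      flagSum b f ((insert ⊤ σ).filter (· ≤ y)) (σ.filter (y ≤ ·)).val := by
  rw [coneSum, coneChain, sum_map_finset_sum]
  rfl

lemma card_coneChain (b : L → L) {σ : Finset L} (hσ : ∀ a ∈ σ, ∀ b ∈ σ, a ≤ b ∨ b ≤ a)
    (htop : ⊤ ∉ σ) :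
    (coneChain b σ).card = ∑ j ∈ Finset.Icc 1 (σ.card + 1), j.factorial := by
  rw [coneChain, Multiset.card_sum, ← Finset.card_insert_of_notMem htop,
    ← sum_factorial_card_filter_le _ (isChain_insert_top hσ)]
  exact Finset.sum_congr rfl fun y _ => card_flags _ _ _

/-- `coneSum` is a contracting homotopy. -/
lemma coneSum_multisetCob (b : L → L) (f : Multiset L → ZMod 2) {σ : Finset L}
    (hσ : ∀ a ∈ σ, ∀ b ∈ σ, a ≤ b ∨ b ≤ a) (htop : ⊤ ∉ σ) :
    coneSum b (multisetCob f) σ = f σ.val + ∑ x ∈ σ, coneSum b f (σ.erase x) := by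
  set T := insert ⊤ σ with hT
  let K : Finset L → Finset L → ZMod 2 := fun A B => flagSum b f A B.val
  have hfaces : ∑ x ∈ σ, coneSum b f (σ.erase x) = ∑ y ∈ T, ∑ x ∈ σ.erase y,
      K ((T.filter (· ≤ y)).erase x) ((σ.filter (y ≤ ·)).erase x) := by
    have : ∀ x ∈ σ, coneSum b f (σ.erase x) = ∑ y ∈ T.erase x,
        K ((T.filter (· ≤ y)).erase x) ((σ.filter (y ≤ ·)).erase x) := by
      intro x hx
      rw [coneSum_eq, ← Finset.erase_insert_of_ne (by rintro rfl; exact htop hx)]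
      refine Finset.sum_congr rfl fun y _ => ?_
      rw [Finset.filter_erase, Finset.filter_erase]
    rw [Finset.sum_congr rfl this]
    refine Finset.sum_comm' fun x y => ?_
    simp only [Finset.mem_erase, ne_eq, eq_comm (a := x) (b := y)]
    tauto
  have hsplit : ∀ y ∈ T, flagSum b (multisetCob f) (T.filter (· ≤ y)) (σ.filter (y ≤ ·)).val =
      K ((T.filter (· ≤ y)).erase y) (σ.filter (y ≤ ·)) +
      (if y ∈ σ then K (T.filter (· ≤ y)) ((σ.filter (y ≤ ·)).erase y) else 0) +
      ∑ x ∈ σ.erase y, K ((T.filter (· ≤ y)).erase x) ((σ.filter (y ≤ ·)).erase x) := by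
    intro y hy
    have hlow : ∑ z ∈ T.filter (· ≤ y), flagSum b f ((T.filter (· ≤ y)).erase z)
        (σ.filter (y ≤ ·)).val = K ((T.filter (· ≤ y)).erase y) (σ.filter (y ≤ ·)) +
        ∑ x ∈ (σ.erase y).filter (· ≤ y),
          K ((T.filter (· ≤ y)).erase x) ((σ.filter (y ≤ ·)).erase x) := by
      rw [← Finset.add_sum_erase (T.filter (· ≤ y)) _ (Finset.mem_filter.2 ⟨hy, le_rfl⟩)]
      congr 1
      refine Finset.sum_congr ?_ fun x hx => ?_
      · ext x
        simp only [hT, Finset.mem_erase, Finset.mem_filter, Finset.mem_insert]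
        constructor
        · rintro ⟨hxy, rfl | hx, hle⟩
          · exact absurd (top_le_iff.1 hle).symm hxy
          · exact ⟨⟨hxy, hx⟩, hle⟩
        · rintro ⟨⟨hxy, hx⟩, hle⟩
          exact ⟨hxy, Or.inr hx, hle⟩
      · simp only [Finset.mem_filter, Finset.mem_erase] at hx
        rw [Finset.erase_eq_of_notMem (s := σ.filter (y ≤ ·))]
        intro h
        exact hx.1.1 (le_antisymm hx.2 (Finset.mem_filter.1 h).2)
    have hhigh : ∑ x ∈ σ.filter (y ≤ ·), flagSum b f (T.filter (· ≤ y))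
        ((σ.filter (y ≤ ·)).erase x).val =
        (if y ∈ σ then K (T.filter (· ≤ y)) ((σ.filter (y ≤ ·)).erase y) else 0) +
        ∑ x ∈ (σ.erase y).filter (¬ · ≤ y),
          K ((T.filter (· ≤ y)).erase x) ((σ.filter (y ≤ ·)).erase x) := by
      have hrest : ∑ x ∈ (σ.filter (y ≤ ·)).erase y, flagSum b f (T.filter (· ≤ y))
          ((σ.filter (y ≤ ·)).erase x).val = ∑ x ∈ (σ.erase y).filter (¬ · ≤ y),
          K ((T.filter (· ≤ y)).erase x) ((σ.filter (y ≤ ·)).erase x) := by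
        refine Finset.sum_congr ?_ fun x hx => ?_
        · ext x
          simp only [Finset.mem_erase, Finset.mem_filter]
          constructor
          · rintro ⟨hxy, hx, hle⟩
            exact ⟨⟨hxy, hx⟩, fun h => hxy (le_antisymm h hle)⟩
          · rintro ⟨⟨hxy, hx⟩, hle⟩
            exact ⟨hxy, hx, (isChain_insert_top hσ x (Finset.mem_insert_of_mem hx) y
              hy).resolve_left hle⟩
        · simp only [Finset.mem_filter, Finset.mem_erase] at hx
          rw [Finset.erase_eq_of_notMem (s := T.filter (· ≤ y))]
          intro h
          exact hx.2 (Finset.mem_filter.1 h).2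
      split_ifs with hyσ
      · rw [← Finset.add_sum_erase _ _ (Finset.mem_filter.2 ⟨hyσ, le_rfl⟩), hrest]
      · rw [zero_add, ← hrest, Finset.erase_eq_of_notMem]
        exact fun h => hyσ (Finset.mem_filter.1 h).1
    rw [flagSum_multisetCob, hlow,
      ← Finset.sum_filter_add_sum_filter_not (σ.erase y) (· ≤ y)]
    have := hhigh
    rw [Finset.sum] at this
    simp only [Finset.erase_val] at this
    rw [this]
    ring
  have hle : T.filter (· ≤ ⊤) = T := Finset.filter_true_of_mem fun x _ => le_top
  have hge : σ.filter (⊤ ≤ ·) = ∅ :=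
    Finset.filter_false_of_mem fun x hx h => htop (top_le_iff.1 h ▸ hx)
  have hdiag : ∑ y ∈ T, (K ((T.filter (· ≤ y)).erase y) (σ.filter (y ≤ ·)) +
      (if y ∈ σ then K (T.filter (· ≤ y)) ((σ.filter (y ≤ ·)).erase y) else 0)) = f σ.val := by
    rw [hT, Finset.sum_insert htop, ← hT, hle, hge, if_neg htop, hT, Finset.erase_insert htop,
      add_zero]
    have hcong : ∀ y ∈ σ, (insert ⊤ σ).filter (· ≤ y) = σ.filter (· ≤ y) := fun y hy => by
      rw [Finset.filter_insert, if_neg fun h : ⊤ ≤ y => htop (top_le_iff.1 h ▸ hy)]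
    have hsum := sum_cuts σ hσ K
    rw [Finset.sum_congr rfl fun y hy => by rw [hcong y hy, if_pos hy], hsum]
    have hself := CharTwo.add_self_eq_zero (K σ ∅)
    have hempty : K ∅ σ = f σ.val := flagSum_empty _ _ _
    linear_combination hself + hempty
  rw [coneSum_eq, Finset.sum_congr rfl hsplit, Finset.sum_add_distrib, hdiag, hfaces]

/-- The simplices occurring in `coneChain b σ` are chains of proper elements. -/
lemma coneChain_spec (b : L → L) (hb : ∀ y, y ≠ ⊥ → b y ≠ ⊥ ∧ b y ≤ y) {σ : Finset L}
    (hσ : ∀ a ∈ σ, ∀ b ∈ σ, a ≤ b ∨ b ≤ a) (hproper : ∀ a ∈ σ, a ≠ ⊥ ∧ a ≠ ⊤)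
    (hbt : (⊤ : L) ≠ ⊥) (hsup : ∀ J ⊆ insert ⊤ σ, J.sup b ≠ ⊤) :
    ∀ M ∈ coneChain b σ, M.card = σ.card + 1 ∧
      (∀ x ∈ M, x ≠ ⊥ ∧ x ≠ ⊤) ∧ ∀ x ∈ M, ∀ y ∈ M, x ≤ y ∨ y ≤ x := by
  intro M hM
  have htop : ⊤ ∉ σ := fun h => (hproper _ h).2 rfl
  obtain ⟨y, hy, hM⟩ := Multiset.mem_sum.1 hM
  have hbot : ∀ x ∈ insert ⊤ σ, x ≠ ⊥ := fun x hx => by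
    rcases Finset.mem_insert.1 hx with rfl | hx
    · exact hbt
    · exact (hproper x hx).1
  have hspec := flags_spec b ((insert ⊤ σ).filter (· ≤ y)) (σ.filter (y ≤ ·)).val
    (fun x hx => (hb x (hbot x (Finset.mem_filter.1 hx).1)).1)
    (hsup _ (Finset.filter_subset _ _))
    (fun x hx => Finset.sup_le fun z hz =>
      ((hb z (hbot z (Finset.mem_filter.1 hz).1)).2.trans (Finset.mem_filter.1 hz).2).trans
        (Finset.mem_filter.1 (Finset.mem_def.2 hx)).2)
    (fun x hx => hproper x (Finset.mem_filter.1 (Finset.mem_def.2 hx)).1)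
    (fun x hx z hz => hσ x (Finset.mem_filter.1 (Finset.mem_def.2 hx)).1 z
      (Finset.mem_filter.1 (Finset.mem_def.2 hz)).1) M hM
  refine ⟨?_, hspec.2⟩
  rw [hspec.1, Finset.card_val]
  rcases Finset.mem_insert.1 hy with rfl | hyσ
  · rw [Finset.filter_true_of_mem fun (x : L) _ => (le_top : x ≤ ⊤),
      Finset.card_insert_of_notMem htop,
      Finset.filter_false_of_mem fun (x : L) hx (h : ⊤ ≤ x) => htop (top_le_iff.1 h ▸ hx),
      Finset.card_empty]
  · rw [Finset.filter_insert, if_neg fun h : ⊤ ≤ y => htop (top_le_iff.1 h ▸ hyσ),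
      ← Finset.card_union_add_card_inter]
    congr 1
    · congr 1
      rw [← Finset.filter_or]
      exact Finset.filter_true_of_mem fun x hx => hσ x hx y hyσ
    · rw [Finset.card_eq_one]
      refine ⟨y, ?_⟩
      ext x
      simp only [Finset.mem_inter, Finset.mem_filter, Finset.mem_singleton]
      constructor
      · rintro ⟨⟨_, h1⟩, _, h2⟩
        exact le_antisymm h1 h2
      · rintro rfl
        exact ⟨⟨hyσ, le_rfl⟩, hyσ, le_rfl⟩

end Cone

section Cochains

lemma mem_faces {V : Type*} {X : Finset (Finset V)} {k : ℕ} {σ : Finset V} :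
    σ ∈ faces X k ↔ σ ∈ X ∧ σ.card = k + 1 :=
  Finset.mem_filter

lemma finsetCongr_mem_faces_iff {V : Type*} {X : Finset (Finset V)} (e : V ≃ V)
    (he : ∀ σ, e.finsetCongr σ ∈ X ↔ σ ∈ X)
    (k : ℕ) (σ : Finset V) : e.finsetCongr σ ∈ faces X k ↔ σ ∈ faces X k := by
  rw [mem_faces, mem_faces, he, Equiv.finsetCongr_apply, Finset.card_map]

lemma cnorm_comp_finsetCongr {V : Type*} {X : Finset (Finset V)} (e : V ≃ V)
    (he : ∀ σ, e.finsetCongr σ ∈ X ↔ σ ∈ X)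
    (k : ℕ) (φ : Finset V → ZMod 2) :
    cnorm X k (fun σ => φ (e.finsetCongr σ)) = cnorm X k φ := by
  refine Finset.card_equiv e.finsetCongr fun σ => ?_
  rw [csupp, csupp, Finset.mem_filter, Finset.mem_filter, finsetCongr_mem_faces_iff e he]

variable {V : Type*} [DecidableEq V]

lemma cob_eq_sum_erase (X : Finset (Finset V)) (k : ℕ) (φ : Finset V → ZMod 2)
    {τ : Finset V} (hτ : τ.card = k + 2) (hX : ∀ x ∈ τ, τ.erase x ∈ X) :
    cob X k φ τ = ∑ x ∈ τ, φ (τ.erase x) := by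
  have hfilter : (faces X k).filter (· ⊆ τ) = τ.image τ.erase := by
    ext σ
    simp only [Finset.mem_filter, mem_faces, Finset.mem_image]
    constructor
    · rintro ⟨⟨_, hc⟩, hsub⟩
      have hcard : (τ \ σ).card = 1 := by rw [Finset.card_sdiff_of_subset hsub]; omega
      obtain ⟨x, hx⟩ := Finset.card_eq_one.1 hcard
      have hxτ : x ∈ τ := (Finset.mem_sdiff.1 (hx ▸ Finset.mem_singleton_self x)).1
      refine ⟨x, hxτ, ?_⟩
      rw [← Finset.sdiff_singleton_eq_erase, ← hx, Finset.sdiff_sdiff_eq_self hsub]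
    · rintro ⟨x, hx, rfl⟩
      exact ⟨⟨hX x hx, by rw [Finset.card_erase_of_mem hx]; omega⟩, Finset.erase_subset _ _⟩
  rw [cob, hfilter, Finset.sum_image (Finset.erase_injOn τ)]

/-- If `φ` and `g` differ by a (reduced) coboundary, the cosystolic norm of `φ` is at most the
norm of `g`. -/
lemma cosys_le_cnorm {X : Finset (Finset V)} (hX : IsComplex X) (k : ℕ)
    (φ g ψ : Finset V → ZMod 2)
    (hg : ∀ σ ∈ faces X k, g σ = φ σ + ∑ x ∈ σ, ψ (σ.erase x)) :
    cosys X k φ ≤ cnorm X k g := by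
  rcases k with _ | k
  · have hg' : ∀ σ ∈ faces X 0, g σ = φ σ + ψ ∅ := by
      intro σ hσ
      obtain ⟨x, rfl⟩ := Finset.card_eq_one.1 (mem_faces.1 hσ).2
      simpa using hg _ hσ
    rw [cosys, if_pos rfl]
    have h01 : ψ ∅ = 0 ∨ ψ ∅ = 1 := by
      generalize ψ ∅ = c
      revert c; decide
    rcases h01 with h | h
    · refine (min_le_left _ _).trans_eq ?_
      rw [cnorm, cnorm, csupp, csupp]
      congr 1
      refine Finset.filter_congr fun σ hσ => ?_
      rw [hg' σ hσ, h, add_zero]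
    · refine (min_le_right _ _).trans_eq ?_
      rw [cnorm, cnorm, csupp, csupp]
      congr 1
      refine Finset.filter_congr fun σ hσ => ?_
      rw [hg' σ hσ, h, add_comm]
  · rw [cosys, if_neg (Nat.succ_ne_zero k)]
    refine Nat.sInf_le ⟨ψ, ?_⟩
    rw [cnorm, cnorm, csupp, csupp]
    congr 1
    refine Finset.filter_congr fun σ hσ => ?_
    have hσ' := mem_faces.1 hσ
    rw [hg σ hσ, Nat.add_sub_cancel, cob_eq_sum_erase X k ψ hσ'.2]
    intro x hx
    refine hX.2 σ hσ'.1 _ (Finset.erase_subset _ _) (Finset.card_pos.1 ?_)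
    rw [Finset.card_erase_of_mem hx, hσ'.2]
    omega

variable {X : Finset (Finset V)} (e : V ≃ V)

lemma cob_comp_finsetCongr (he : ∀ σ, e.finsetCongr σ ∈ X ↔ σ ∈ X) (k : ℕ)
    (φ : Finset V → ZMod 2) (τ : Finset V) :
    cob X k (fun σ => φ (e.finsetCongr σ)) τ = cob X k φ (e.finsetCongr τ) := by
  refine Finset.sum_equiv e.finsetCongr (fun σ => ?_) fun σ _ => rfl
  rw [Finset.mem_filter, Finset.mem_filter, finsetCongr_mem_faces_iff e he,
    Equiv.finsetCongr_apply, Equiv.finsetCongr_apply, Finset.map_subset_map]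

lemma cosys_le_cosys_comp_finsetCongr (he : ∀ σ, e.finsetCongr σ ∈ X ↔ σ ∈ X) (k : ℕ)
    (φ : Finset V → ZMod 2) : cosys X k φ ≤ cosys X k (fun σ => φ (e.finsetCongr σ)) := by
  rcases k with _ | k
  · rw [cosys, cosys, if_pos rfl, if_pos rfl, cnorm_comp_finsetCongr e he,
      cnorm_comp_finsetCongr e he 0 fun σ => 1 + φ σ]
  · rw [cosys, cosys, if_neg (Nat.succ_ne_zero k), if_neg (Nat.succ_ne_zero k)]
    refine le_csInf ⟨_, 0, rfl⟩ ?_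
    rintro m ⟨ψ, rfl⟩
    refine Nat.sInf_le ⟨fun σ => ψ (e.finsetCongr.symm σ), ?_⟩
    refine Eq.trans ?_ (cnorm_comp_finsetCongr e he (k + 1)
      fun τ => φ τ + cob X k (fun σ => ψ (e.finsetCongr.symm σ)) τ)
    congr 1
    funext τ
    have hcob := cob_comp_finsetCongr e he k (fun σ => ψ (e.finsetCongr.symm σ)) τ
    simp only [Equiv.symm_apply_apply] at hcob
    exact congrArg _ hcob

end Cochains

/-- For a transitive action on a finite set `F`, the proportion of the elements moving a given
point into `A ⊆ F` is the density of `A`. -/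
lemma card_mul_card_filter_mem_of_transitive {G α : Type*} [Fintype G] [Group G]
    [DecidableEq α] (ρ : G →* Equiv.Perm α) (F : Finset α) (hF : ∀ (g : G), ∀ x ∈ F, ρ g x ∈ F)
    (htrans : ∀ x ∈ F, ∀ y ∈ F, ∃ g : G, ρ g x = y) {x : α} (hx : x ∈ F) {A : Finset α}
    (hA : A ⊆ F) :
    F.card * (Finset.univ.filter fun g : G => ρ g x ∈ A).card = A.card * Fintype.card G := by
  have hconst : ∀ y ∈ F, (Finset.univ.filter fun g : G => ρ g x = y).card =
      (Finset.univ.filter fun g : G => ρ g x = x).card := by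
    intro y hy
    obtain ⟨h, rfl⟩ := htrans x hx y hy
    refine Finset.card_equiv (Equiv.mulLeft h⁻¹) fun g => ?_
    simp [Equiv.Perm.inv_def, Equiv.symm_apply_eq]
  have hcount : ∀ B ⊆ F, (Finset.univ.filter fun g : G => ρ g x ∈ B).card =
      B.card * (Finset.univ.filter fun g : G => ρ g x = x).card := by
    intro B hB
    rw [Finset.card_eq_sum_card_fiberwise (s := Finset.univ.filter fun g : G => ρ g x ∈ B)
      (f := fun g : G => ρ g x) (t := B) fun g hg => (Finset.mem_filter.1 (Finset.mem_coe.1 hg)).2,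
      Finset.sum_const_nat]
    intro y hy
    rw [← hconst y (hB hy), Finset.filter_filter]
    congr 1
    refine Finset.filter_congr fun g _ => ⟨fun h => h.2, fun h => ⟨h ▸ hy, h⟩⟩
  have huniv : Fintype.card G = F.card * (Finset.univ.filter fun g : G => ρ g x = x).card := by
    rw [← hcount F subset_rfl, Finset.filter_true_of_mem fun g _ => hF g x hx, Finset.card_univ]
  rw [hcount A hA, huniv]
  ring



/-- The action of permutations of the vertices on finite sets of vertices. -/
def finsetPerm (V : Type*) : Equiv.Perm V →* Equiv.Perm (Finset V) where
  toFun e := Equiv.finsetCongr e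
  map_one' := by
    ext s x
    simp [Equiv.Perm.one_def]
  map_mul' e e' := by
    ext s x
    simp [Equiv.Perm.mul_def]

/-- An expansion bound obtained by averaging a contracting homotopy over a group acting
transitively on the `(k+1)`-faces. Here `fill σ` contains the support of the chain which the
homotopy associates with `σ`. -/
lemma card_faces_mul_cosys_le {V G : Type*} [DecidableEq V] [Fintype G] [Group G]
    (a : G →* Equiv.Perm V) {X : Finset (Finset V)} (hX : IsComplex X) (k S : ℕ)
    (ha : ∀ g σ, (a g).finsetCongr σ ∈ X ↔ σ ∈ X)
    (htrans : ∀ σ ∈ faces X (k + 1), ∀ τ ∈ faces X (k + 1), ∃ g, (a g).finsetCongr σ = τ)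
    (fill : Finset V → Finset (Finset V))
    (hfill : ∀ σ ∈ faces X k, fill σ ⊆ faces X (k + 1) ∧ (fill σ).card ≤ S)
    (hhomotopy : ∀ φ : Finset V → ZMod 2, ∃ g ψ : Finset V → ZMod 2, ∀ σ ∈ faces X k,
      g σ = φ σ + ∑ x ∈ σ, ψ (σ.erase x) ∧ (g σ ≠ 0 → ∃ τ ∈ fill σ, cob X k φ τ ≠ 0))
    (φ : Finset V → ZMod 2) :
    (faces X (k + 1)).card * cosys X k φ ≤
      (faces X k).card * S * cnorm X (k + 1) (cob X k φ) := by
  set F := faces X (k + 1) with hF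
  set A := csupp X (k + 1) (cob X k φ) with hA
  have hAF : A ⊆ F := Finset.filter_subset _ _
  let ρ : G →* Equiv.Perm (Finset V) := (finsetPerm V).comp a
  have hpoint : ∀ g : G, cosys X k φ ≤
      ∑ σ ∈ faces X k, ∑ τ ∈ fill σ, if ρ g τ ∈ A then 1 else 0 := by
    intro g
    refine (cosys_le_cosys_comp_finsetCongr (a g) (ha g) k φ).trans ?_
    obtain ⟨c, ψ, hc⟩ := hhomotopy fun σ => φ ((a g).finsetCongr σ)
    refine (cosys_le_cnorm hX k _ c ψ fun σ hσ => (hc σ hσ).1).trans ?_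
    rw [cnorm, csupp, Finset.card_filter]
    refine Finset.sum_le_sum fun σ hσ => ?_
    split_ifs with hcσ
    · obtain ⟨τ, hτ, hne⟩ := (hc σ hσ).2 hcσ
      rw [cob_comp_finsetCongr (a g) (ha g)] at hne
      have hmem : ρ g τ ∈ A := Finset.mem_filter.2
        ⟨(finsetCongr_mem_faces_iff (a g) (ha g) (k + 1) τ).2 ((hfill σ hσ).1 hτ), hne⟩
      exact (if_pos hmem).ge.trans (Finset.single_le_sum
        (f := fun τ => if ρ g τ ∈ A then 1 else 0) (fun _ _ => Nat.zero_le _) hτ)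
    · exact Nat.zero_le _
  have hcount : ∀ τ ∈ F, F.card * ∑ g : G, (if ρ g τ ∈ A then 1 else 0) =
      A.card * Fintype.card G := by
    intro τ hτ
    rw [← Finset.card_filter]
    exact card_mul_card_filter_mem_of_transitive ρ F
      (fun g σ hσ => (finsetCongr_mem_faces_iff (a g) (ha g) (k + 1) σ).2 hσ) htrans hτ hAF
  have htotal : Fintype.card G * cosys X k φ ≤
      ∑ σ ∈ faces X k, ∑ τ ∈ fill σ, ∑ g : G, if ρ g τ ∈ A then 1 else 0 := by
    calc Fintype.card G * cosys X k φ = ∑ _g : G, cosys X k φ := by simp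
      _ ≤ ∑ g : G, ∑ σ ∈ faces X k, ∑ τ ∈ fill σ, if ρ g τ ∈ A then 1 else 0 :=
        Finset.sum_le_sum fun g _ => hpoint g
      _ = _ := by
        rw [Finset.sum_comm]
        exact Finset.sum_congr rfl fun σ _ => Finset.sum_comm
  refine Nat.le_of_mul_le_mul_right ?_ (Fintype.card_pos (α := G))
  calc F.card * cosys X k φ * Fintype.card G = F.card * (Fintype.card G * cosys X k φ) := by ring
    _ ≤ F.card * ∑ σ ∈ faces X k, ∑ τ ∈ fill σ, ∑ g : G, (if ρ g τ ∈ A then 1 else 0) :=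
      Nat.mul_le_mul_left _ htotal
    _ = ∑ σ ∈ faces X k, ∑ _τ ∈ fill σ, A.card * Fintype.card G := by
      rw [Finset.mul_sum]
      refine Finset.sum_congr rfl fun σ hσ => ?_
      rw [Finset.mul_sum]
      exact Finset.sum_congr rfl fun τ hτ => hcount τ ((hfill σ hσ).1 hτ)
    _ ≤ ∑ _σ ∈ faces X k, S * (A.card * Fintype.card G) := by
      refine Finset.sum_le_sum fun σ hσ => ?_
      rw [Finset.sum_const, smul_eq_mul]
      exact Nat.mul_le_mul_right _ (hfill σ hσ).2
    _ = (faces X k).card * S * cnorm X (k + 1) (cob X k φ) * Fintype.card G := by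
      rw [Finset.sum_const, smul_eq_mul, cnorm, ← hA]
      ring

lemma natCast_div_le_natCast_div {a b c d : ℕ} (hb : b ≠ 0) (hd : d ≠ 0) (h : a * d ≤ b * c) :
    (a : ENNReal) / b ≤ c / d := by
  rw [ENNReal.div_le_iff (by exact_mod_cast hb) (ENNReal.natCast_ne_top b), div_eq_mul_inv,
    mul_right_comm, ← div_eq_mul_inv, ENNReal.le_div_iff_mul_le
    (Or.inl (by exact_mod_cast hd)) (Or.inl (ENNReal.natCast_ne_top d)), mul_comm (c : ENNReal)]
  exact_mod_cast h

section Rank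

variable {L : Type*} [Lattice L] [BoundedOrder L]

lemma exists_atom_le_of_ne_bot
    (hatomistic : ∀ x : L, ∃ s : Finset L, (∀ a ∈ s, IsAtom a) ∧ x = s.sup id)
    {x : L} (hx : x ≠ ⊥) : ∃ a, IsAtom a ∧ a ≤ x := by
  obtain ⟨s, hs, rfl⟩ := hatomistic x
  rcases s.eq_empty_or_nonempty with rfl | ⟨a, ha⟩
  · exact absurd Finset.sup_empty hx
  · exact ⟨a, hs a ha, Finset.le_sup (f := id) ha⟩

/-- The rank of a join of atoms is at most their number. -/
lemma rank_sup_atoms_le (rk : L → ℕ) (hrkbot : rk ⊥ = 0)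
    (hrkcov : ∀ x y : L, x ⋖ y → rk y = rk x + 1)
    (hsubmod : ∀ x y : L, rk (x ⊔ y) + rk (x ⊓ y) ≤ rk x + rk y)
    {ι : Type*} (J : Finset ι) (b : ι → L) (hb : ∀ y ∈ J, IsAtom (b y)) :
    rk (J.sup b) ≤ J.card := by
  classical
  induction J using Finset.induction_on with
  | empty => simp [hrkbot]
  | insert a s ha ih =>
    rw [Finset.sup_insert, Finset.card_insert_of_notMem ha]
    have h1 := hsubmod (b a) (s.sup b)
    have h2 := ih fun y hy => hb y (Finset.mem_insert_of_mem hy)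
    have h3 := hrkcov ⊥ (b a) (hb a (Finset.mem_insert_self _ _)).bot_covBy
    omega

end Rank

/-- **Expansion of homogeneous geometric lattices**: if `L` is a finite geometric lattice
of rank `n ≥ 3` whose automorphism group acts transitively on maximal chains of
`L̄ = L ∖ {⊥, ⊤}`, and `Δ` is the order complex of `L̄`, then
`h^{n-3}(Δ) ≥ f_{n-2}(Δ) / (f_{n-3}(Δ) ⬝ Σ_{j=1}^{n-1} j!)`. -/
theorem homogeneous_geometric_lattice_expansion
    {L : Type*} [DecidableEq L] [Fintype L] [Lattice L] [BoundedOrder L]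
    (n : ℕ) (hn : 3 ≤ n) (rk : L → ℕ)
    (hrkbot : rk ⊥ = 0) (hrktop : rk ⊤ = n)
    (hrkcov : ∀ x y : L, x ⋖ y → rk y = rk x + 1)
    (hsubmod : ∀ x y : L, rk (x ⊔ y) + rk (x ⊓ y) ≤ rk x + rk y)
    (hatomistic : ∀ x : L, ∃ s : Finset L, (∀ a ∈ s, IsAtom a) ∧ x = s.sup id)
    (Δ : Finset (Finset L))
    (hΔ : ∀ σ : Finset L, σ ∈ Δ ↔
      σ.Nonempty ∧ (∀ a ∈ σ, a ≠ ⊥ ∧ a ≠ ⊤) ∧ ∀ a ∈ σ, ∀ b ∈ σ, a ≤ b ∨ b ≤ a)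
    (hhom : ∀ σ ∈ faces Δ (n - 2), ∀ τ ∈ faces Δ (n - 2),
      ∃ e : L ≃o L, σ.image e = τ) :
    ((faces Δ (n - 2)).card : ENNReal) /
        (((faces Δ (n - 3)).card : ENNReal) *
          ((∑ j ∈ Finset.Icc 1 (n - 1), Nat.factorial j : ℕ) : ENNReal)) ≤
      cheeger Δ (n - 3) := by
  classical
  obtain ⟨k, rfl⟩ : ∃ k, n = k + 3 := ⟨n - 3, by omega⟩
  have h1 : k + 3 - 1 = k + 2 := rfl
  have h2 : k + 3 - 2 = k + 1 := rfl
  have h3 : k + 3 - 3 = k := rfl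
  rw [h2] at hhom
  rw [h1, h2, h3]
  have hcomplex : IsComplex Δ := by
    refine ⟨fun σ hσ => ((hΔ σ).1 hσ).1, fun σ hσ τ hτσ hτ => (hΔ τ).2 ⟨hτ, ?_, ?_⟩⟩
    · exact fun a ha => ((hΔ σ).1 hσ).2.1 a (hτσ ha)
    · exact fun a ha b hb => ((hΔ σ).1 hσ).2.2 a (hτσ ha) b (hτσ hb)
  have hexists : ∀ y : L, ∃ a : L, y ≠ ⊥ → IsAtom a ∧ a ≤ y := by
    intro y
    by_cases hy : y = ⊥
    · exact ⟨⊥, fun h => absurd hy h⟩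
    obtain ⟨a, ha⟩ := exists_atom_le_of_ne_bot hatomistic hy
    exact ⟨a, fun _ => ha⟩
  choose b hb using hexists
  have hbt : (⊤ : L) ≠ ⊥ := fun h => by
    rw [h, hrkbot] at hrktop
    omega
  have hsup : ∀ J : Finset L, J.card ≤ k + 2 → (∀ y ∈ J, y ≠ ⊥) → J.sup b ≠ ⊤ := by
    intro J hJ hbot htop
    have := rank_sup_atoms_le rk hrkbot hrkcov hsubmod J b fun y hy => (hb y (hbot y hy)).1
    rw [htop, hrktop] at this
    omega
  have hspec : ∀ σ ∈ faces Δ k, ∀ M ∈ coneChain b σ, M.card = k + 2 ∧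
      (∀ x ∈ M, x ≠ ⊥ ∧ x ≠ ⊤) ∧ ∀ x ∈ M, ∀ y ∈ M, x ≤ y ∨ y ≤ x := by
    intro σ hσ
    obtain ⟨hσΔ, hcard⟩ := mem_faces.1 hσ
    obtain ⟨_, hproper, hchain⟩ := (hΔ σ).1 hσΔ
    have := coneChain_spec b (fun y hy => ⟨(hb y hy).1.1, (hb y hy).2⟩) hchain hproper hbt
      fun J hJ => hsup J (((Finset.card_le_card hJ).trans (Finset.card_insert_le _ _)).trans
        (by omega)) fun y hy => by
          rcases Finset.mem_insert.1 (hJ hy) with rfl | h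
          · exact hbt
          · exact (hproper y h).1
    rwa [hcard] at this
  have toFinset_mem : ∀ σ ∈ faces Δ k, ∀ M ∈ coneChain b σ, M.Nodup →
      M.toFinset ∈ faces Δ (k + 1) := by
    intro σ hσ M hM hnodup
    obtain ⟨hcard, hproper, hchain⟩ := hspec σ hσ M hM
    have hcard' : M.toFinset.card = k + 2 := by
      rw [Multiset.toFinset_card_of_nodup hnodup, hcard]
    refine mem_faces.2 ⟨(hΔ _).2 ⟨Finset.card_pos.1 (by omega), ?_, ?_⟩, hcard'⟩
    · exact fun x hx => hproper x (Multiset.mem_toFinset.1 hx)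
    · exact fun x hx y hy => hchain x (Multiset.mem_toFinset.1 hx) y (Multiset.mem_toFinset.1 hy)
  have : Fintype (L ≃o L) :=
    have : Finite (L ≃o L) := DFunLike.finite _
    Fintype.ofFinite _
  refine le_sInf ?_
  rintro r ⟨φ, hφ, rfl⟩
  have htop : ∀ σ ∈ faces Δ k, ⊤ ∉ σ := fun σ hσ h =>
    (((hΔ σ).1 (mem_faces.1 hσ).1).2.1 _ h).2 rfl
  have hbound := card_faces_mul_cosys_le (G := L ≃o L)
    ⟨⟨fun e => e.toEquiv, rfl⟩, fun _ _ => rfl⟩ hcomplex k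
    (∑ j ∈ Finset.Icc 1 (k + 2), j.factorial) ?_ ?_
    (fun σ => ((coneChain b σ).toFinset.filter Multiset.Nodup).image Multiset.toFinset) ?_ ?_ φ
  · have hcosys : cosys Δ k φ ≤ (faces Δ k).card := by
      refine (cosys_le_cnorm hcomplex k φ φ 0 fun σ _ => by simp).trans ?_
      exact Finset.card_filter_le _ _
    rw [← Nat.cast_mul]
    refine natCast_div_le_natCast_div (Nat.mul_ne_zero (by omega) ?_) hφ.ne' hbound
    exact (Finset.sum_pos (fun j _ => j.factorial_pos) ⟨1, by simp⟩).ne'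
  · intro e σ
    have himage : e.toEquiv.finsetCongr σ = σ.image e := Finset.map_eq_image _ _
    change e.toEquiv.finsetCongr σ ∈ Δ ↔ σ ∈ Δ
    rw [himage, hΔ, hΔ]
    simp
  · intro σ hσ τ hτ
    obtain ⟨e, he⟩ := hhom σ hσ τ hτ
    refine ⟨e, ?_⟩
    rw [← he, Equiv.finsetCongr_apply, Finset.map_eq_image]
    rfl
  · intro σ hσ
    constructor
    · intro τ hτ
      obtain ⟨M, hM, rfl⟩ := Finset.mem_image.1 hτ
      obtain ⟨hM, hnodup⟩ := Finset.mem_filter.1 hM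
      exact toFinset_mem σ hσ M (Multiset.mem_toFinset.1 hM) hnodup
    · obtain ⟨hσΔ, hcard⟩ := mem_faces.1 hσ
      refine (Finset.card_image_le.trans (Finset.card_filter_le _ _)).trans
        ((Multiset.toFinset_card_le _).trans_eq ?_)
      rw [card_coneChain b ((hΔ σ).1 hσΔ).2.2 (htop σ hσ), hcard]
  · intro φ
    refine ⟨coneSum b (multisetCob (extendCochain φ)), coneSum b (extendCochain φ),
      fun σ hσ => ⟨?_, fun hne => ?_⟩⟩
    · rw [coneSum_multisetCob b _ ((hΔ σ).1 (mem_faces.1 hσ).1).2.2 (htop σ hσ),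
        extendCochain_val]
    · obtain ⟨M, hM, hMne⟩ : ∃ M ∈ coneChain b σ, multisetCob (extendCochain φ) M ≠ 0 := by
        by_contra! h
        refine hne (Multiset.sum_eq_zero fun z hz => ?_)
        obtain ⟨M, hM, rfl⟩ := Multiset.mem_map.1 hz
        exact h M hM
      have hnodup : M.Nodup := by
        by_contra h
        exact hMne (multisetCob_extendCochain_eq_zero φ h)
      refine ⟨M.toFinset, Finset.mem_image_of_mem _ (Finset.mem_filter.2
        ⟨Multiset.mem_toFinset.2 hM, hnodup⟩), ?_⟩
      obtain ⟨hτΔ, hτ⟩ := mem_faces.1 (toFinset_mem σ hσ M hM hnodup)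
      rw [cob_eq_sum_erase Δ k φ hτ, ← multisetCob_extendCochain_val, Multiset.toFinset_val,
        hnodup.dedup]
      · exact hMne
      · intro x hx
        refine hcomplex.2 _ hτΔ _ (Finset.erase_subset _ _) (Finset.card_pos.1 ?_)
        rw [Finset.card_erase_of_mem hx, hτ]
        omega
end

section
/- Expansion of the spherical building A_{n−1}(F_q): Let q be a prime power and n ≥ 3, and let A_{n−1}(F_q) be the order complex of the poset of linear subspaces W of F_q^n with 0 < dim W < n, ordered by inclusion. Then h^{n−3}(A_{n−1}(F_q)) ≥ (q+1) / ( (n−1) · Σ_{j=1}^{n−1} j! ). -/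
open Finset

namespace FlagChain

theorem add_self_chain {α : Type*} (c : α →₀ ZMod 2) : c + c = 0 := by
  ext σ
  simpa using CharTwo.add_self_eq_zero (c σ)

section Chains

variable {L : Type*} [DecidableEq L]

/-- The boundary of a chain; the empty simplex is allowed, so this is the reduced boundary. -/
noncomputable def boundary : (Finset L →₀ ZMod 2) →ₗ[ZMod 2] (Finset L →₀ ZMod 2) :=
  Finsupp.linearCombination (ZMod 2) fun σ => ∑ x ∈ σ, Finsupp.single (σ.erase x) 1

/-- The join of a chain with a vertex; degenerate simplices are sent to zero. -/
noncomputable def cone (x : L) : (Finset L →₀ ZMod 2) →ₗ[ZMod 2] (Finset L →₀ ZMod 2) :=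
  Finsupp.linearCombination (ZMod 2) fun σ =>
    if x ∈ σ then 0 else Finsupp.single (insert x σ) 1

theorem boundary_single (σ : Finset L) :
    boundary (Finsupp.single σ 1) = ∑ x ∈ σ, Finsupp.single (σ.erase x) (1 : ZMod 2) := by
  simp [boundary]

theorem cone_single (x : L) (σ : Finset L) :
    cone x (Finsupp.single σ 1) =
      if x ∈ σ then 0 else Finsupp.single (insert x σ) (1 : ZMod 2) := by
  simp [cone]

theorem cone_single_of_notMem {x : L} {σ : Finset L} (h : x ∉ σ) :
    cone x (Finsupp.single σ 1) = Finsupp.single (insert x σ) (1 : ZMod 2) := by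
  rw [cone_single, if_neg h]

theorem sum_erase_insert {M : Type*} [AddCommMonoid M] (f : Finset L → M) {x : L}
    {σ : Finset L} (h : x ∉ σ) :
    ∑ y ∈ insert x σ, f ((insert x σ).erase y) = f σ + ∑ y ∈ σ, f (insert x (σ.erase y)) := by
  rw [Finset.sum_insert h, Finset.erase_insert h]
  congr 1
  refine Finset.sum_congr rfl fun y hy => ?_
  rw [Finset.erase_insert_of_ne (by rintro rfl; exact h hy)]

theorem boundary_cone (x : L) (c : Finset L →₀ ZMod 2) :
    boundary (cone x c) = c + cone x (boundary c) := by
  suffices boundary ∘ₗ cone x = LinearMap.id + cone x ∘ₗ boundary from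
    LinearMap.congr_fun this c
  ext1 σ
  ext1
  simp only [LinearMap.comp_apply, Finsupp.lsingle_apply, LinearMap.add_apply, LinearMap.id_apply,
    boundary_single, map_sum]
  by_cases h : x ∈ σ
  · rw [cone_single, if_pos h, map_zero, Finset.sum_eq_single_of_mem x h, cone_single,
      if_neg (Finset.notMem_erase x σ), Finset.insert_erase h, add_self_chain]
    intro y _ hy
    rw [cone_single, if_pos (Finset.mem_erase.2 ⟨hy.symm, h⟩)]
  · rw [cone_single_of_notMem h, boundary_single,
      sum_erase_insert (fun ρ => Finsupp.single ρ (1 : ZMod 2)) h]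
    congr 1
    refine Finset.sum_congr rfl fun y hy => ?_
    rw [cone_single_of_notMem fun h' => h (Finset.mem_of_mem_erase h')]

theorem exists_mem_support_of_mem_support_linearCombination {α β : Type*}
    (f : α → β →₀ ZMod 2) (c : α →₀ ZMod 2) {ρ : β}
    (h : ρ ∈ (Finsupp.linearCombination (ZMod 2) f c).support) :
    ∃ σ ∈ c.support, ρ ∈ (f σ).support := by
  classical
  rw [Finsupp.linearCombination_apply, Finsupp.sum] at h
  obtain ⟨σ, hσ, h⟩ := Finset.mem_biUnion.1 (Finsupp.support_finsetSum h)
  exact ⟨σ, hσ, Finsupp.support_smul h⟩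

theorem card_support_linearCombination_le {α β : Type*} (f : α → β →₀ ZMod 2)
    (c : α →₀ ZMod 2) (B : ℕ) (h : ∀ σ ∈ c.support, (f σ).support.card ≤ B) :
    (Finsupp.linearCombination (ZMod 2) f c).support.card ≤ c.support.card * B := by
  classical
  refine le_trans (Finset.card_le_card fun ρ hρ => ?_)
    (Finset.card_biUnion_le_card_mul c.support (fun σ => (f σ).support) B h)
  obtain ⟨σ, hσ, h⟩ := exists_mem_support_of_mem_support_linearCombination f c hρ
  exact Finset.mem_biUnion.2 ⟨σ, hσ, h⟩

theorem exists_of_mem_support_cone {x : L} {c : Finset L →₀ ZMod 2} {ρ : Finset L}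
    (h : ρ ∈ (cone x c).support) : ∃ σ ∈ c.support, x ∉ σ ∧ ρ = insert x σ := by
  obtain ⟨σ, hσ, h⟩ := exists_mem_support_of_mem_support_linearCombination _ c h
  refine ⟨σ, hσ, ?_⟩
  split_ifs at h with hx
  · simp at h
  · exact ⟨hx, Finset.mem_singleton.1 (Finsupp.support_single_subset h)⟩

theorem card_support_cone_le (x : L) (c : Finset L →₀ ZMod 2) :
    (cone x c).support.card ≤ c.support.card := by
  refine (card_support_linearCombination_le _ c 1 fun σ _ => ?_).trans (mul_one _).le
  split_ifs
  · simp
  · exact (Finset.card_le_card Finsupp.support_single_subset).trans (by simp)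

theorem card_support_add_le {α : Type*} (a b : α →₀ ZMod 2) :
    (a + b).support.card ≤ a.support.card + b.support.card := by
  classical
  exact (Finset.card_le_card Finsupp.support_add).trans (Finset.card_union_le _ _)

end Chains

section Flags

variable {L : Type*}

/-- Any two elements of `τ` are comparable. -/
def IsTotal [LE L] (τ : Finset L) : Prop :=
  ∀ x ∈ τ, ∀ y ∈ τ, x ≤ y ∨ y ≤ x

theorem IsTotal.mono [LE L] {σ τ : Finset L} (h : IsTotal τ) (hστ : σ ⊆ τ) : IsTotal σ :=
  fun x hx y hy => h x (hστ hx) y (hστ hy)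

theorem IsTotal.insert_of_le [Preorder L] [DecidableEq L] {τ : Finset L} (h : IsTotal τ) {M : L}
    (hM : ∀ x ∈ τ, x ≤ M) : IsTotal (insert M τ) := by
  intro x hx y hy
  rcases Finset.mem_insert.1 hx with hxM | hx <;> rcases Finset.mem_insert.1 hy with hyM | hy
  · exact Or.inl (hxM.trans hyM.symm).le
  · exact Or.inr (hxM ▸ hM y hy)
  · exact Or.inl (hyM ▸ hM x hx)
  · exact h x hx y hy

theorem IsTotal.eq_empty_or_insert [PartialOrder L] [DecidableEq L] {τ : Finset L}
    (h : IsTotal τ) :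
    τ = ∅ ∨ ∃ M τ', (∀ x ∈ τ', x < M) ∧ τ = insert M τ' := by
  rcases τ.eq_empty_or_nonempty with h0 | h0
  · exact Or.inl h0
  · obtain ⟨M, hM⟩ := τ.exists_maximal h0
    refine Or.inr ⟨M, τ.erase M, fun x hx => ?_, (Finset.insert_erase hM.1).symm⟩
    obtain ⟨hxM, hx⟩ := Finset.mem_erase.1 hx
    refine lt_of_le_of_ne ?_ hxM
    rcases h x hx M hM.1 with h | h
    · exact h
    · exact hM.2 hx h

theorem IsTotal.induction [PartialOrder L] [DecidableEq L]
    {P : (τ : Finset L) → IsTotal τ → Prop}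
    (empty : ∀ h, P ∅ h)
    (insert : ∀ M τ, (∀ x ∈ τ, x < M) → ∀ (hτ : IsTotal τ), P τ hτ → ∀ h, P (insert M τ) h)
    (τ : Finset L) (h : IsTotal τ) : P τ h := by
  induction hk : τ.card generalizing τ with
  | zero =>
    obtain rfl := Finset.card_eq_zero.1 hk
    exact empty h
  | succ k ih =>
    rcases h.eq_empty_or_insert with rfl | ⟨M, τ', hM, rfl⟩
    · exact empty h
    · have h' : IsTotal τ' := h.mono (Finset.subset_insert _ _)
      refine insert M τ' hM h' (ih τ' h' ?_) h
      rw [Finset.card_insert_of_notMem fun h => (hM M h).false] at hk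
      omega

theorem sup_insert_of_lt [SemilatticeSup L] [OrderBot L] [DecidableEq L] {M : L}
    {τ : Finset L} (hM : ∀ x ∈ τ, x < M) : (insert M τ).sup id = M := by
  rw [Finset.sup_insert, id_eq, sup_eq_left]
  exact Finset.sup_le fun x hx => (hM x hx).le

variable [SemilatticeSup L] [OrderBot L]

/-- `τ` is a flag of nonzero elements strictly below `W`. -/
def IsFlag (W : L) (τ : Finset L) : Prop :=
  (∀ x ∈ τ, x ≠ ⊥ ∧ x < W) ∧ IsTotal τ

theorem IsFlag.mono {W : L} {σ τ : Finset L} (h : IsFlag W τ) (hστ : σ ⊆ τ) : IsFlag W σ :=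
  ⟨fun x hx => h.1 x (hστ hx), h.2.mono hστ⟩

variable [DecidableEq L]

/-- The contraction of a flag onto the vertex `p` along `x ≤ x ⊔ p ≥ p`. -/
noncomputable def prism (p : L) (τ : Finset L) : Finset L →₀ ZMod 2 :=
  if h : τ.sup id ∈ τ then
    cone (τ.sup id ⊔ p) (Finsupp.single τ 1 + prism p (τ.erase (τ.sup id)))
  else Finsupp.single {p} 1
termination_by τ.card
decreasing_by exact Finset.card_erase_lt_of_mem h

theorem prism_empty (p : L) : prism p ∅ = Finsupp.single {p} 1 := by
  rw [prism]
  simp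

theorem prism_insert (p : L) {M : L} {τ : Finset L} (hM : ∀ x ∈ τ, x < M) :
    prism p (insert M τ) = cone (M ⊔ p) (Finsupp.single (insert M τ) 1 + prism p τ) := by
  have hMτ : M ∉ τ := fun h => (hM M h).false
  rw [prism, sup_insert_of_lt hM, dif_pos (Finset.mem_insert_self M τ), Finset.erase_insert hMτ]

theorem boundary_prism (p : L) {τ : Finset L} (hτ : IsTotal τ) :
    boundary (prism p τ) + ∑ x ∈ τ, prism p (τ.erase x) = Finsupp.single τ 1 := by
  induction τ, hτ using IsTotal.induction with
  | empty => simp [prism_empty, boundary_single]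
  | insert M τ hM hτ ih _ =>
    have hMτ : M ∉ τ := fun h => (hM M h).false
    have hsum : ∑ x ∈ τ, prism p (insert M (τ.erase x)) =
        cone (M ⊔ p) (∑ x ∈ τ, Finsupp.single (insert M (τ.erase x)) 1 +
          ∑ x ∈ τ, prism p (τ.erase x)) := by
      rw [← Finset.sum_add_distrib, map_sum]
      exact Finset.sum_congr rfl fun x _ =>
        prism_insert p fun y hy => hM y (Finset.mem_of_mem_erase hy)
    rw [sum_erase_insert (prism p) hMτ, hsum, prism_insert p hM, boundary_cone, map_add boundary,
      boundary_single, sum_erase_insert (fun ρ => Finsupp.single ρ (1 : ZMod 2)) hMτ,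
      ← ih]
    simp only [map_add]
    linear_combination (norm := module) add_self_chain (prism p τ) +
      add_self_chain (cone (M ⊔ p) (boundary (prism p τ))) +
      add_self_chain (cone (M ⊔ p) (∑ x ∈ τ, prism p (τ.erase x))) +
      add_self_chain (cone (M ⊔ p) (∑ x ∈ τ, Finsupp.single (insert M (τ.erase x)) 1))

theorem boundary_linearCombination_prism (p : L) {c : Finset L →₀ ZMod 2}
    (hc : ∀ ρ ∈ c.support, IsTotal ρ) :
    boundary (Finsupp.linearCombination (ZMod 2) (prism p) c) +
      Finsupp.linearCombination (ZMod 2) (prism p) (boundary c) = c := by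
  have hc' : c = ∑ ρ ∈ c.support, c ρ • Finsupp.single ρ 1 := by
    conv_lhs => rw [← Finsupp.sum_single c]
    simp [Finsupp.sum]
  conv_lhs => rw [hc']
  conv_rhs => rw [hc']
  simp only [map_sum, map_smul, ← Finset.sum_add_distrib, ← smul_add]
  refine Finset.sum_congr rfl fun ρ hρ => ?_
  congr 1
  conv_rhs => rw [← boundary_prism p (hc ρ hρ)]
  simp [boundary_single]

theorem card_support_prism_le (p : L) {τ : Finset L} (hτ : IsTotal τ) :
    (prism p τ).support.card ≤ τ.card + 1 := by
  induction τ, hτ using IsTotal.induction with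
  | empty =>
    rw [prism_empty]
    exact (Finset.card_le_card Finsupp.support_single_subset).trans (by simp)
  | insert M τ hM hτ ih _ =>
    rw [prism_insert p hM, Finset.card_insert_of_notMem fun h => (hM M h).false]
    refine (card_support_cone_le _ _).trans ((card_support_add_le _ _).trans ?_)
    have : (Finsupp.single (insert M τ) (1 : ZMod 2)).support.card ≤ 1 :=
      (Finset.card_le_card Finsupp.support_single_subset).trans (by simp)
    omega

theorem IsFlag.insert_of_le {W M : L} {τ : Finset L} (h : IsFlag W τ) (hM : ∀ x ∈ τ, x ≤ M)
    (hM0 : M ≠ ⊥) (hMW : M < W) : IsFlag W (insert M τ) := by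
  refine ⟨fun x hx => ?_, h.2.insert_of_le hM⟩
  rcases Finset.mem_insert.1 hx with rfl | hx
  · exact ⟨hM0, hMW⟩
  · exact h.1 x hx

theorem of_mem_support_prism {p W : L} (hp : p ≠ ⊥) (hpW : p < W) {τ : Finset L}
    (hτ : IsTotal τ) (hτW : ∀ x ∈ τ, x ≠ ⊥ ∧ x ⊔ p < W) :
    ∀ ρ ∈ (prism p τ).support,
      IsFlag W ρ ∧ ρ.card = τ.card + 1 ∧ ∀ y ∈ ρ, y ≤ τ.sup id ⊔ p := by
  induction τ, hτ using IsTotal.induction with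
  | empty =>
    intro ρ hρ
    rw [prism_empty] at hρ
    obtain rfl := Finset.mem_singleton.1 (Finsupp.support_single_subset hρ)
    refine ⟨⟨?_, ?_⟩, by simp, by simp⟩
    · simpa using ⟨hp, hpW⟩
    · intro x hx y hy
      rw [Finset.mem_singleton.1 hx, Finset.mem_singleton.1 hy]
      exact Or.inl le_rfl
  | insert M τ hM hτ ih _ =>
    intro ρ hρ
    have hMτ : M ∉ τ := fun h => (hM M h).false
    obtain ⟨hM0, hMW⟩ := hτW M (Finset.mem_insert_self M τ)
    rw [prism_insert p hM] at hρ
    obtain ⟨ρ', hρ', hnot, rfl⟩ := exists_of_mem_support_cone hρ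
    have key : IsFlag W ρ' ∧ ρ'.card = τ.card + 1 ∧ ∀ y ∈ ρ', y ≤ M ⊔ p := by
      rcases Finset.mem_union.1 (Finsupp.support_add hρ') with h | h
      · obtain rfl := Finset.mem_singleton.1 (Finsupp.support_single_subset h)
        refine ⟨⟨fun x hx => ?_, hτ.insert_of_le fun x hx => (hM x hx).le⟩,
          Finset.card_insert_of_notMem hMτ, fun y hy => ?_⟩
        · exact ⟨(hτW x hx).1, le_sup_left.trans_lt (hτW x hx).2⟩
        · rcases Finset.mem_insert.1 hy with rfl | hy
          · exact le_sup_left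
          · exact (hM y hy).le.trans le_sup_left
      · obtain ⟨h1, h2, h3⟩ := ih (fun x hx => hτW x (Finset.mem_insert_of_mem hx)) ρ' h
        exact ⟨h1, h2, fun y hy => (h3 y hy).trans
          (sup_le_sup_right (Finset.sup_le fun x hx => (hM x hx).le) p)⟩
    obtain ⟨h1, h2, h3⟩ := key
    refine ⟨h1.insert_of_le h3 (fun h => hp (sup_eq_bot_iff.1 h).2) hMW, ?_, ?_⟩
    · rw [Finset.card_insert_of_notMem hnot, Finset.card_insert_of_notMem hMτ, h2]
    · rw [sup_insert_of_lt hM]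
      intro y hy
      rcases Finset.mem_insert.1 hy with rfl | hy
      · exact le_rfl
      · exact h3 y hy

end Flags

section Contraction

open Module

variable {F V : Type*} [Field F] [AddCommGroup V] [Module F V]

/-- `c` is a chain contraction of the flags below `W` of length at most `finrank W - 2`. The last
field controls the size of `c` on the codimension-one faces of a complete flag. -/
structure IsContraction [DecidableEq (Submodule F V)] (W : Submodule F V)
    (c : Finset (Submodule F V) → Finset (Submodule F V) →₀ ZMod 2) : Prop where
  isFlag : ∀ τ, IsFlag W τ → τ.card + 2 ≤ finrank F W →
    ∀ ρ ∈ (c τ).support, IsFlag W ρ ∧ ρ.card = τ.card + 1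
  boundary_add : ∀ τ, IsFlag W τ → τ.card + 2 ≤ finrank F W →
    boundary (c τ) + ∑ x ∈ τ, c (τ.erase x) = Finsupp.single τ 1
  sum_card : ∀ σ, IsFlag W σ → σ.card + 1 = finrank F W →
    ∑ x ∈ σ, (c (σ.erase x)).support.card + 1 ≤ (finrank F W).factorial

theorem finrank_sup_le_succ [FiniteDimensional F V] {M p : Submodule F V} (hp : finrank F p = 1) :
    finrank F (M ⊔ p : Submodule F V) ≤ finrank F M + 1 := by
  have := Submodule.finrank_add_le_finrank_add_finrank M p
  omega

theorem exists_lt_finrank_eq_one {W : Submodule F V} (hW : 2 ≤ finrank F W) :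
    ∃ p : Submodule F V, finrank F p = 1 ∧ p < W := by
  have hne : W ≠ ⊥ := by
    rintro rfl
    simp at hW
  obtain ⟨v, hv, hv0⟩ := W.exists_mem_ne_zero_of_ne_bot hne
  have h1 : finrank F (F ∙ v) = 1 := finrank_span_singleton hv0
  refine ⟨F ∙ v, h1, lt_of_le_of_ne ((Submodule.span_singleton_le_iff_mem v W).2 hv) ?_⟩
  rintro h
  rw [← h, h1] at hW
  omega

theorem sq_succ_le_factorial (k : ℕ) : (k + 1) * (k + 1) + 1 ≤ (k + 2).factorial := by
  induction k with
  | zero => simp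
  | succ k ih =>
    rw [Nat.factorial_succ]
    nlinarith

variable [DecidableEq (Submodule F V)]

/-- The contraction of flags below `W`: flags whose top does not span `W` together with `p` are
contracted to `p`, the others are contracted inside their top by `d` first. -/
noncomputable def extend (W p : Submodule F V)
    (d : Submodule F V → Finset (Submodule F V) → Finset (Submodule F V) →₀ ZMod 2)
    (τ : Finset (Submodule F V)) : Finset (Submodule F V) →₀ ZMod 2 :=
  open Classical in
  if τ.sup id ∈ τ ∧ τ.sup id ⊔ p = W then
    cone (τ.sup id) (d (τ.sup id) (τ.erase (τ.sup id))) +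
      Finsupp.linearCombination (ZMod 2) (prism p) (d (τ.sup id) (τ.erase (τ.sup id)))
  else prism p τ

theorem extend_insert {W p M : Submodule F V} {τ : Finset (Submodule F V)}
    (d : Submodule F V → Finset (Submodule F V) → Finset (Submodule F V) →₀ ZMod 2)
    (hM : ∀ x ∈ τ, x < M) (hMW : M ⊔ p = W) :
    extend W p d (insert M τ) =
      cone M (d M τ) + Finsupp.linearCombination (ZMod 2) (prism p) (d M τ) := by
  have hMτ : M ∉ τ := fun h => (hM M h).false
  rw [extend, sup_insert_of_lt hM, if_pos ⟨Finset.mem_insert_self M τ, hMW⟩,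
    Finset.erase_insert hMτ]

theorem extend_eq_prism {W p : Submodule F V} {τ : Finset (Submodule F V)}
    (d : Submodule F V → Finset (Submodule F V) → Finset (Submodule F V) →₀ ZMod 2)
    (h : ∀ x ∈ τ, x ⊔ p ≠ W) : extend W p d τ = prism p τ := by
  rw [extend, if_neg fun h' => h _ h'.1 h'.2]

variable [FiniteDimensional F V]

theorem isContraction_extend {W p : Submodule F V} (hp : finrank F p = 1) (hpW : p < W)
    {d : Submodule F V → Finset (Submodule F V) → Finset (Submodule F V) →₀ ZMod 2}
    (hd : ∀ M : Submodule F V, finrank F M + 1 = finrank F W → IsContraction M (d M)) :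
    IsContraction W (extend W p d) := by
  have hp0 : p ≠ ⊥ := by
    rintro rfl
    simp at hp
  have hW2 : 2 ≤ finrank F W := by
    have := Submodule.finrank_lt_finrank_of_lt hpW
    omega
  have hcomp {M : Submodule F V} (hMW : M < W) (hM : M ⊔ p = W) :
      finrank F M + 1 = finrank F W := by
    have h1 := Submodule.finrank_lt_finrank_of_lt hMW
    have h2 := finrank_sup_le_succ (M := M) hp
    rw [hM] at h2
    omega
  have hbelow {M x : Submodule F V} (hMW : M < W) (hM : M ⊔ p = W) (hx : x < M) :
      x ⊔ p < W := by
    refine lt_of_le_of_ne (sup_le (hx.le.trans hMW.le) hpW.le) fun h => ?_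
    have h1 := hcomp hMW hM
    have h2 := hcomp (hx.trans hMW) h
    have h3 := Submodule.finrank_lt_finrank_of_lt hx
    omega
  have hgood {x : Submodule F V} (hxW : x < W) (hx : x ⊔ p ≠ W) : x ⊔ p < W :=
    lt_of_le_of_ne (sup_le hxW.le hpW.le) hx
  -- Either `τ` is contracted to `p`, or its top is a complement of `p`.
  have hcases (τ : Finset (Submodule F V)) (hτ : IsFlag W τ) :
      (∀ x ∈ τ, x ⊔ p ≠ W) ∨ ∃ M τ', (∀ x ∈ τ', x < M) ∧ τ = insert M τ' ∧ M < W ∧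
        M ⊔ p = W ∧ IsFlag M τ' := by
    rcases hτ.2.eq_empty_or_insert with rfl | ⟨M, τ', hM, rfl⟩
    · left
      simp
    · have hMW := (hτ.1 M (Finset.mem_insert_self _ _)).2
      by_cases hMp : M ⊔ p = W
      · exact Or.inr ⟨M, τ', hM, rfl, hMW, hMp,
          fun x hx => ⟨(hτ.1 x (Finset.mem_insert_of_mem hx)).1, hM x hx⟩,
          hτ.2.mono (Finset.subset_insert _ _)⟩
      · left
        intro x hx h
        have hxM : x ≤ M := by
          rcases Finset.mem_insert.1 hx with rfl | hx
          · exact le_rfl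
          · exact (hM x hx).le
        exact (hgood hMW hMp).not_ge (h.symm.le.trans (sup_le_sup_right hxM p))
  refine ⟨fun τ hτ hcard ρ hρ => ?_, fun τ hτ hcard => ?_, fun σ hσ hcard => ?_⟩
  · rcases hcases τ hτ with h | ⟨M, τ', hM, rfl, hMW, hMp, hτ'⟩
    · rw [extend_eq_prism d h] at hρ
      obtain ⟨h1, h2, -⟩ := of_mem_support_prism hp0 hpW hτ.2
        (fun x hx => ⟨(hτ.1 x hx).1, hgood (hτ.1 x hx).2 (h x hx)⟩) ρ hρ
      exact ⟨h1, h2⟩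
    · have hMτ : M ∉ τ' := fun h => (hM M h).false
      have hrank := hcomp hMW hMp
      rw [extend_insert d hM hMp] at hρ
      rw [Finset.card_insert_of_notMem hMτ] at hcard ⊢
      have hdM := (hd M hrank).isFlag τ' hτ' (by omega)
      rcases Finset.mem_union.1 (Finsupp.support_add hρ) with h | h
      · obtain ⟨ρ', hρ', hnot, rfl⟩ := exists_of_mem_support_cone h
        obtain ⟨h1, h2⟩ := hdM ρ' hρ'
        refine ⟨IsFlag.insert_of_le ⟨fun x hx => ⟨(h1.1 x hx).1, (h1.1 x hx).2.trans hMW⟩, h1.2⟩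
          (fun x hx => (h1.1 x hx).2.le) (hτ.1 M (Finset.mem_insert_self _ _)).1 hMW, ?_⟩
        rw [Finset.card_insert_of_notMem hnot, h2]
      · obtain ⟨ρ', hρ', h⟩ := exists_mem_support_of_mem_support_linearCombination _ _ h
        obtain ⟨h1, h2⟩ := hdM ρ' hρ'
        obtain ⟨h3, h4, -⟩ := of_mem_support_prism hp0 hpW h1.2
          (fun x hx => ⟨(h1.1 x hx).1, hbelow hMW hMp (h1.1 x hx).2⟩) ρ h
        exact ⟨h3, by rw [h4, h2]⟩
  · rcases hcases τ hτ with h | ⟨M, τ', hM, rfl, hMW, hMp, hτ'⟩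
    · rw [extend_eq_prism d h, ← boundary_prism p hτ.2]
      congr 1
      exact Finset.sum_congr rfl fun x _ =>
        extend_eq_prism d fun y hy => h y (Finset.mem_of_mem_erase hy)
    · have hMτ : M ∉ τ' := fun h => (hM M h).false
      have hrank := hcomp hMW hMp
      rw [Finset.card_insert_of_notMem hMτ] at hcard
      have hflag := (hd M hrank).isFlag τ' hτ' (by omega)
      have hbd := (hd M hrank).boundary_add τ' hτ' (by omega)
      have hprism := boundary_linearCombination_prism p (c := d M τ')
        fun ρ hρ => (hflag ρ hρ).1.2
      set A := Finsupp.linearCombination (ZMod 2) (prism p) with hA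
      have hsum : ∑ x ∈ τ', extend W p d (insert M (τ'.erase x)) =
          cone M (∑ x ∈ τ', d M (τ'.erase x)) + A (∑ x ∈ τ', d M (τ'.erase x)) := by
        rw [map_sum, map_sum, ← Finset.sum_add_distrib]
        exact Finset.sum_congr rfl fun x _ =>
          extend_insert d (fun y hy => hM y (Finset.mem_of_mem_erase hy)) hMp
      have hdM : boundary (d M τ') =
          Finsupp.single τ' 1 + ∑ x ∈ τ', d M (τ'.erase x) := by
        linear_combination (norm := module) hbd -
          add_self_chain (∑ x ∈ τ', d M (τ'.erase x))
      have hAτ : A (Finsupp.single τ' 1) = prism p τ' := by simp [hA]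
      rw [sum_erase_insert (extend W p d) hMτ, hsum, extend_insert d hM hMp,
        extend_eq_prism d fun x hx => (hbelow hMW hMp (hM x hx)).ne, map_add, boundary_cone,
        ← cone_single_of_notMem hMτ]
      rw [hdM, map_add A, hAτ] at hprism
      rw [hdM, map_add (cone M)]
      linear_combination (norm := module) hprism +
        add_self_chain (cone M (∑ x ∈ τ', d M (τ'.erase x))) + add_self_chain (d M τ')
  · rcases hcases σ hσ with h | ⟨M, τ', hM, rfl, hMW, hMp, hτ'⟩
    · have hle : ∑ x ∈ σ, (extend W p d (σ.erase x)).support.card ≤ σ.card * σ.card := by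
        refine Finset.sum_le_card_nsmul _ _ _ fun x hx => ?_
        rw [extend_eq_prism d fun y hy => h y (Finset.mem_of_mem_erase hy)]
        refine (card_support_prism_le p (hσ.2.mono (Finset.erase_subset x σ))).trans ?_
        rw [Finset.card_erase_add_one hx]
      obtain ⟨k, hk⟩ : ∃ k, σ.card = k + 1 := ⟨σ.card - 1, by omega⟩
      have := sq_succ_le_factorial k
      rw [← hcard]
      rw [hk] at hle ⊢
      exact (Nat.add_le_add_right hle 1).trans this
    · have hMτ : M ∉ τ' := fun h => (hM M h).false
      have hrank := hcomp hMW hMp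
      rw [Finset.card_insert_of_notMem hMτ] at hcard
      have hbound := (hd M hrank).sum_card τ' hτ' (by omega)
      rw [sum_erase_insert (fun ρ => (extend W p d ρ).support.card) hMτ,
        extend_eq_prism d fun x hx => (hbelow hMW hMp (hM x hx)).ne]
      have h1 : (prism p τ').support.card ≤ τ'.card + 1 := card_support_prism_le p hτ'.2
      have h2 : ∑ x ∈ τ', (extend W p d (insert M (τ'.erase x))).support.card ≤
          ∑ x ∈ τ', (d M (τ'.erase x)).support.card * (τ'.card + 2) := by
        refine Finset.sum_le_sum fun x hx => ?_
        have hx' := Finset.card_erase_add_one hx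
        rw [extend_insert d (fun y hy => hM y (Finset.mem_of_mem_erase hy)) hMp]
        refine (card_support_add_le _ _).trans ?_
        have h3 := card_support_cone_le M (d M (τ'.erase x))
        have h4 := card_support_linearCombination_le (prism p) (d M (τ'.erase x)) (τ'.card + 1)
          fun ρ hρ => by
            obtain ⟨h5, h6⟩ := (hd M hrank).isFlag _ (hτ'.mono (Finset.erase_subset x τ'))
              (by omega) ρ hρ
            have := card_support_prism_le p h5.2
            omega
        nlinarith
      rw [← Finset.sum_mul] at h2
      rw [← hrank, Nat.factorial_succ]
      have h7 : finrank F M = τ'.card + 1 := by omega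
      rw [h7] at hbound ⊢
      nlinarith

theorem exists_isContraction (W : Submodule F V) (hW : 1 ≤ finrank F W) :
    ∃ c, IsContraction W c := by
  induction hk : finrank F W generalizing W with
  | zero => omega
  | succ k ih =>
    rcases Nat.eq_zero_or_pos k with rfl | hk0
    · refine ⟨0, fun τ _ h => by omega, fun τ _ h => by omega, fun σ _ h => ?_⟩
      obtain rfl : σ = ∅ := Finset.card_eq_zero.1 (by omega)
      simpa using Nat.one_le_iff_ne_zero.2 (finrank F W).factorial_ne_zero
    · obtain ⟨p, hp, hpW⟩ := exists_lt_finrank_eq_one (W := W) (by omega)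
      have hex (M : Submodule F V) : ∃ c, finrank F M + 1 = finrank F W → IsContraction M c := by
        by_cases hM : finrank F M + 1 = finrank F W
        · obtain ⟨c, hc⟩ := ih M (by omega) (by omega)
          exact ⟨c, fun _ => hc⟩
        · exact ⟨0, fun h => absurd h hM⟩
      choose d hd using hex
      exact ⟨extend W p d, isContraction_extend hp hpW hd⟩

end Contraction

section Building

open Module

variable {F V : Type*} [Field F] [AddCommGroup V] [Module F V]

theorem IsFlag.isTotal_insert [DecidableEq (Submodule F V)]
    {τ : Finset (Submodule F V)} (hτ : IsFlag ⊤ τ) :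
    IsTotal (insert ⊥ (insert ⊤ τ)) := by
  intro x hx y hy
  simp only [Finset.mem_insert] at hx hy
  rcases hx with rfl | rfl | hx
  · exact Or.inl bot_le
  · exact Or.inr le_top
  · rcases hy with rfl | rfl | hy
    · exact Or.inr bot_le
    · exact Or.inl le_top
    · exact hτ.2 x hx y hy

/-- The subspaces strictly between `B` and `T` coming from the points of `ℙ(T / B)`. -/
theorem exists_injective_between {B T : Submodule F V} (hBT : B ≤ T)
    (h : finrank F (T ⧸ B.submoduleOf T) = 2) :
    ∃ w : Projectivization F (T ⧸ B.submoduleOf T) → Submodule F V,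
      Function.Injective w ∧ ∀ x, B < w x ∧ w x < T := by
  let f : Submodule F (T ⧸ B.submoduleOf T) → Submodule F V :=
    fun U => (U.comap (B.submoduleOf T).mkQ).map T.subtype
  have hinj : Function.Injective f :=
    (Submodule.map_injective_of_injective T.injective_subtype).comp
      (Submodule.comap_injective_of_surjective (Submodule.mkQ_surjective _))
  have hf : StrictMono f := Monotone.strictMono_of_injective
    (fun U U' h => Submodule.map_mono (Submodule.comap_mono h)) hinj
  have hbot : f ⊥ = B := by
    simp only [f, Submodule.comap_bot, Submodule.ker_mkQ]
    rw [Submodule.submoduleOf, Submodule.map_comap_subtype, inf_eq_right]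
    exact hBT
  have htop : f ⊤ = T := by simp [f]
  refine ⟨fun x => f x.submodule, fun x y hxy => Projectivization.submodule_injective (hinj hxy),
    fun x => ⟨?_, ?_⟩⟩
  · conv_lhs => rw [← hbot]
    refine hf (bot_lt_iff_ne_bot.2 fun h0 => ?_)
    have := x.finrank_submodule
    rw [h0] at this
    simp at this
  · conv_rhs => rw [← htop]
    refine hf (lt_top_iff_ne_top.2 fun h0 => ?_)
    have := x.finrank_submodule
    rw [h0, finrank_top, h] at this
    omega

variable [FiniteDimensional F V]

theorem IsTotal.le_of_finrank_le {s : Finset (Submodule F V)} (hs : IsTotal s)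
    {U W : Submodule F V} (hU : U ∈ s) (hW : W ∈ s) (h : finrank F U ≤ finrank F W) : U ≤ W := by
  rcases hs U hU W hW with h' | h'
  · exact h'
  · exact (Submodule.eq_of_le_of_finrank_le h' h).ge

theorem IsTotal.eq_of_finrank_eq {s : Finset (Submodule F V)} (hs : IsTotal s)
    {U W : Submodule F V} (hU : U ∈ s) (hW : W ∈ s) (h : finrank F U = finrank F W) : U = W :=
  (hs.le_of_finrank_le hU hW h.le).antisymm (hs.le_of_finrank_le hW hU h.ge)

theorem IsFlag.finrank_mem {τ : Finset (Submodule F V)} (hτ : IsFlag ⊤ τ) {U : Submodule F V}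
    (hU : U ∈ τ) : 0 < finrank F U ∧ finrank F U < finrank F V := by
  obtain ⟨h0, h1⟩ := hτ.1 U hU
  refine ⟨Nat.pos_of_ne_zero fun h => h0 (Submodule.finrank_eq_zero.1 h), ?_⟩
  simpa using Submodule.finrank_lt_finrank_of_lt h1

theorem IsFlag.card_image_finrank {τ : Finset (Submodule F V)} (hτ : IsFlag ⊤ τ) :
    (τ.image fun U : Submodule F V => finrank F U).card = τ.card :=
  Finset.card_image_of_injOn fun _ hU _ hW h => hτ.2.eq_of_finrank_eq hU hW h

theorem IsFlag.image_finrank_subset {τ : Finset (Submodule F V)} (hτ : IsFlag ⊤ τ) :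
    (τ.image fun U : Submodule F V => finrank F U) ⊆ Finset.Ioo 0 (finrank F V) := by
  intro j hj
  obtain ⟨U, hU, rfl⟩ := Finset.mem_image.1 hj
  exact Finset.mem_Ioo.2 (hτ.finrank_mem hU)

theorem IsFlag.exists_finrank_eq {τ : Finset (Submodule F V)} (hτ : IsFlag ⊤ τ)
    (hcard : τ.card + 1 = finrank F V) {j : ℕ} (h0 : 0 < j) (hj : j < finrank F V) :
    ∃ U ∈ τ, finrank F U = j := by
  have h : (τ.image fun U : Submodule F V => finrank F U) = Finset.Ioo 0 (finrank F V) := by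
    refine Finset.eq_of_subset_of_card_le hτ.image_finrank_subset ?_
    rw [hτ.card_image_finrank, Nat.card_Ioo]
    omega
  exact Finset.mem_image.1 (h ▸ Finset.mem_Ioo.2 ⟨h0, hj⟩)

theorem IsFlag.exists_gap {τ : Finset (Submodule F V)} (hτ : IsFlag ⊤ τ)
    (hcard : τ.card + 2 = finrank F V) :
    ∃ i, 0 < i ∧ i < finrank F V ∧ (∀ U ∈ τ, finrank F U ≠ i) ∧
      ∀ j, 0 < j → j < finrank F V → j ≠ i → ∃ U ∈ τ, finrank F U = j := by
  have h1 : (Finset.Ioo 0 (finrank F V) \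
      τ.image fun U : Submodule F V => finrank F U).card = 1 := by
    rw [Finset.card_sdiff_of_subset hτ.image_finrank_subset, hτ.card_image_finrank, Nat.card_Ioo]
    omega
  obtain ⟨i, hi⟩ := Finset.card_eq_one.1 h1
  have hi' : ∀ j, (0 < j ∧ j < finrank F V) ∧ (∀ U ∈ τ, finrank F U ≠ j) ↔ j = i := by
    intro j
    rw [← Finset.mem_singleton, ← hi]
    simp
  obtain ⟨⟨h2, h3⟩, h4⟩ := (hi' i).2 rfl
  refine ⟨i, h2, h3, h4, fun j hj0 hj hji => ?_⟩
  by_contra! h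
  exact hji ((hi' j).1 ⟨⟨hj0, hj⟩, h⟩)

variable [DecidableEq (Submodule F V)]

/-- A complete flag comes from a basis. -/
theorem IsFlag.exists_basis {σ : Finset (Submodule F V)} (hσ : IsFlag ⊤ σ)
    (hcard : σ.card + 1 = finrank F V) :
    ∃ b : Basis (Fin (finrank F V)) F V,
      ∀ U ∈ σ, U = Submodule.span F (b '' {i | i.val < finrank F U}) := by
  have hex : ∀ j : ℕ, j ≤ finrank F V →
      ∃ U ∈ insert ⊥ (insert ⊤ σ), finrank F U = j := by
    intro j hj
    rcases Nat.eq_zero_or_pos j with rfl | h0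
    · exact ⟨⊥, by simp, by simp⟩
    · rcases hj.eq_or_lt with rfl | hj
      · exact ⟨⊤, by simp, by simp⟩
      · obtain ⟨U, hU, h⟩ := hσ.exists_finrank_eq hcard h0 hj
        exact ⟨U, by simp [hU], h⟩
  choose! W hWmem hWrank using hex
  have htot := hσ.isTotal_insert
  have hv : ∀ i : Fin (finrank F V), ∃ v ∈ W (i + 1), v ∉ W i := by
    intro i
    refine Set.exists_of_ssubset ?_
    refine SetLike.coe_ssubset_coe.2 (lt_of_le_not_ge ?_ fun h => ?_)
    · refine htot.le_of_finrank_le (hWmem _ (by omega)) (hWmem _ (by omega)) ?_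
      rw [hWrank _ (by omega), hWrank _ (by omega)]
      omega
    · have := Submodule.finrank_mono h
      rw [hWrank _ (by omega), hWrank _ (by omega)] at this
      omega
  choose v hvmem hvnot using hv
  have hspan : ∀ j ≤ finrank F V, W j = Submodule.span F (v '' {i | i.val < j}) := by
    intro j hj
    induction j with
    | zero =>
      rw [Submodule.finrank_eq_zero.1 (hWrank 0 hj)]
      simp
    | succ j ih =>
      have hset : {i : Fin (finrank F V) | i.val < j + 1} =
          insert ⟨j, hj⟩ {i | i.val < j} := by
        ext i
        simp only [Set.mem_ofPred_eq, Set.mem_insert_iff, Fin.ext_iff]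
        omega
      rw [hset, Set.image_insert_eq, Submodule.span_insert, ← ih (by omega)]
      have hle : W j ≤ W (j + 1) :=
        htot.le_of_finrank_le (hWmem _ (by omega)) (hWmem _ hj)
          (by rw [hWrank _ (by omega), hWrank _ hj]; omega)
      have hle' : (F ∙ v ⟨j, hj⟩) ⊔ W j ≤ W (j + 1) :=
        sup_le ((Submodule.span_singleton_le_iff_mem _ _).2 (hvmem ⟨j, hj⟩)) hle
      refine (Submodule.eq_of_le_of_finrank_le hle' ?_).symm
      have hlt : W j < (F ∙ v ⟨j, hj⟩) ⊔ W j := by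
        refine lt_of_le_not_ge le_sup_right fun h => hvnot ⟨j, hj⟩ ?_
        exact h (Submodule.mem_sup_left (Submodule.mem_span_singleton_self _))
      have := Submodule.finrank_lt_finrank_of_lt hlt
      rw [hWrank _ (by omega)] at this
      rw [hWrank _ hj]
      omega
  have htop : ⊤ ≤ Submodule.span F (Set.range v) := by
    have h := hspan _ le_rfl
    rw [Submodule.eq_top_of_finrank_eq (hWrank _ le_rfl)] at h
    rw [h]
    exact Submodule.span_mono (Set.image_subset_range _ _)
  refine ⟨basisOfTopLeSpanOfCardEqFinrank v htop (by simp), fun U hU => ?_⟩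
  rw [coe_basisOfTopLeSpanOfCardEqFinrank]
  have hlt := (hσ.finrank_mem hU).2.le
  rw [← hspan _ hlt]
  exact htot.eq_of_finrank_eq (by simp [hU]) (hWmem _ hlt) (hWrank _ hlt).symm

/-- The automorphisms of the lattice of subspaces act transitively on complete flags. -/
theorem IsFlag.exists_orderIso_image_eq {σ σ' : Finset (Submodule F V)} (hσ : IsFlag ⊤ σ)
    (hσ' : IsFlag ⊤ σ') (hcard : σ.card + 1 = finrank F V) (hcard' : σ'.card + 1 = finrank F V) :
    ∃ g : Submodule F V ≃o Submodule F V, σ.image g = σ' := by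
  obtain ⟨b, hb⟩ := hσ.exists_basis hcard
  obtain ⟨b', hb'⟩ := hσ'.exists_basis hcard'
  let e := b.equiv b' (Equiv.refl _)
  refine ⟨Submodule.orderIsoMapComap e, Finset.eq_of_subset_of_card_le ?_ ?_⟩
  · intro x hx
    obtain ⟨U, hU, rfl⟩ := Finset.mem_image.1 hx
    obtain ⟨h0, h1⟩ := hσ.finrank_mem hU
    obtain ⟨U', hU', h⟩ := hσ'.exists_finrank_eq hcard' h0 h1
    convert hU'
    rw [Submodule.orderIsoMapComap_apply, hb' U' hU', h]
    conv_lhs => rw [hb U hU]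
    rw [Submodule.map_span, ← Set.image_comp]
    congr 1
    refine Set.image_congr fun i _ => ?_
    simp [e]
  · rw [Finset.card_image_of_injective _ (Submodule.orderIsoMapComap e).injective]
    omega

/-- A codimension-one flag lies in at least `q + 1` complete flags. -/
theorem IsFlag.card_add_one_le [Finite F] {τ : Finset (Submodule F V)} (hτ : IsFlag ⊤ τ)
    (hcard : τ.card + 2 = finrank F V) {X : Finset (Finset (Submodule F V))}
    (hX : ∀ σ, σ ∈ X ↔ IsFlag ⊤ σ ∧ σ.card + 1 = finrank F V) :
    Nat.card F + 1 ≤ (X.filter fun σ => τ ⊆ σ).card := by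
  obtain ⟨i, hi0, hin, hi, hne⟩ := hτ.exists_gap hcard
  have htot := hτ.isTotal_insert
  obtain ⟨B, hB, hBr⟩ : ∃ B ∈ insert ⊥ (insert ⊤ τ), finrank F B = i - 1 := by
    rcases Nat.eq_zero_or_pos (i - 1) with h | h
    · exact ⟨⊥, by simp, by simp [h]⟩
    · obtain ⟨U, hU, h⟩ := hne (i - 1) h (by omega) (by omega)
      exact ⟨U, by simp [hU], h⟩
  obtain ⟨T, hT, hTr⟩ : ∃ T ∈ insert ⊥ (insert ⊤ τ), finrank F T = i + 1 := by
    rcases (Nat.succ_le_of_lt hin).eq_or_lt with h | h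
    · exact ⟨⊤, by simp, by simp [← h]⟩
    · obtain ⟨U, hU, h⟩ := hne (i + 1) (by omega) h (by omega)
      exact ⟨U, by simp [hU], h⟩
  have hBT : B ≤ T := htot.le_of_finrank_le hB hT (by omega)
  have hquot : finrank F (T ⧸ B.submoduleOf T) = 2 := by
    have h1 := (B.submoduleOf T).finrank_quotient_add_finrank
    have h2 := (Submodule.submoduleOfEquivOfLe hBT).finrank_eq
    omega
  have hcmp : ∀ U ∈ τ, U ≤ B ∨ T ≤ U := by
    intro U hU
    have hU' : U ∈ insert ⊥ (insert ⊤ τ) := by simp [hU]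
    rcases (hi U hU).lt_or_gt with h | h
    · exact Or.inl (htot.le_of_finrank_le hU' hB (by omega))
    · exact Or.inr (htot.le_of_finrank_le hT hU' (by omega))
  obtain ⟨w, hw, hBwT⟩ := exists_injective_between hBT hquot
  have hwτ : ∀ x, w x ∉ τ := by
    intro x hx
    rcases hcmp _ hx with h | h
    · exact (hBwT x).1.not_ge h
    · exact (hBwT x).2.not_ge h
  have hmem : ∀ x, insert (w x) τ ∈ X.filter fun σ => τ ⊆ σ := by
    intro x
    obtain ⟨h1, h2⟩ := hBwT x
    refine Finset.mem_filter.2 ⟨(hX _).2 ⟨⟨?_, ?_⟩, ?_⟩, Finset.subset_insert _ _⟩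
    · intro U hU
      rcases Finset.mem_insert.1 hU with rfl | hU
      · exact ⟨(bot_le.trans_lt h1).ne', h2.trans_le le_top⟩
      · exact hτ.1 U hU
    · intro U hU U' hU'
      rcases Finset.mem_insert.1 hU with rfl | hU <;>
        rcases Finset.mem_insert.1 hU' with rfl | hU'
      · exact Or.inl le_rfl
      · exact (hcmp U' hU').elim (fun h => Or.inr (h.trans h1.le)) fun h => Or.inl (h2.le.trans h)
      · exact (hcmp U hU).elim (fun h => Or.inl (h.trans h1.le)) fun h => Or.inr (h2.le.trans h)
      · exact hτ.2 U hU U' hU'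
    · rw [Finset.card_insert_of_notMem (hwτ x)]
      omega
  have hinj : Function.Injective fun x =>
      (⟨insert (w x) τ, hmem x⟩ : {σ // σ ∈ X.filter fun σ => τ ⊆ σ}) := by
    intro x y hxy
    have h : insert (w x) τ = insert (w y) τ := congrArg Subtype.val hxy
    have h' : w x ∈ insert (w y) τ := h ▸ Finset.mem_insert_self _ _
    exact hw ((Finset.mem_insert.1 h').resolve_right (hwτ x))
  rw [← Projectivization.card_of_finrank_two F _ hquot]
  exact (Nat.card_le_card_of_injective _ hinj).trans
    (Nat.card_eq_fintype_card.trans (Fintype.card_coe _)).le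

end Building

section Cochains

variable {L : Type*} [DecidableEq L]

theorem sum_faces_subset {X : Finset (Finset L)} (hX : IsComplex X) {k : ℕ} {τ : Finset L}
    (hτ : τ ∈ faces X (k + 1)) {M : Type*} [AddCommMonoid M] (f : Finset L → M) :
    ∑ σ ∈ (faces X k).filter (fun σ => σ ⊆ τ), f σ = ∑ x ∈ τ, f (τ.erase x) := by
  obtain ⟨hτX, hτc⟩ := Finset.mem_filter.1 hτ
  rw [← Finset.sum_image (s := τ) (g := τ.erase) (f := f) (Finset.erase_injOn τ)]
  refine Finset.sum_congr ?_ fun _ _ => rfl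
  ext σ
  simp only [faces, Finset.mem_filter, Finset.mem_image]
  constructor
  · rintro ⟨⟨-, hσc⟩, hστ⟩
    obtain ⟨x, hx⟩ : ∃ x, τ \ σ = {x} := by
      rw [← Finset.card_eq_one, Finset.card_sdiff_of_subset hστ]
      omega
    have hx' : x ∈ τ \ σ := hx ▸ Finset.mem_singleton_self x
    refine ⟨x, (Finset.mem_sdiff.1 hx').1, ?_⟩
    rw [Finset.erase_eq, ← hx, Finset.sdiff_sdiff_eq_self hστ]
  · rintro ⟨x, hx, rfl⟩
    have hc := Finset.card_erase_add_one hx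
    refine ⟨⟨hX.2 τ hτX _ (Finset.erase_subset x τ) (Finset.card_pos.1 (by omega)), by omega⟩,
      Finset.erase_subset x τ⟩

theorem cosys_le {X : Finset (Finset L)} (hX : IsComplex X) (k : ℕ) (φ ψ : Finset L → ZMod 2) :
    cosys X k φ ≤ ((faces X k).filter fun τ => φ τ + ∑ x ∈ τ, ψ (τ.erase x) ≠ 0).card := by
  unfold cosys
  split_ifs with hk
  · subst hk
    have h0 : ∀ τ ∈ faces X 0, ∑ x ∈ τ, ψ (τ.erase x) = ψ ∅ := by
      intro τ hτ
      obtain ⟨x, rfl⟩ := Finset.card_eq_one.1 (Finset.mem_filter.1 hτ).2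
      simp
    rcases (show ∀ a : ZMod 2, a = 0 ∨ a = 1 by decide) (ψ ∅) with h | h
    · refine (min_le_left _ _).trans (Finset.card_le_card fun τ hτ => ?_)
      obtain ⟨h1, h2⟩ := Finset.mem_filter.1 hτ
      refine Finset.mem_filter.2 ⟨h1, ?_⟩
      rwa [h0 τ h1, h, add_zero]
    · refine (min_le_right _ _).trans (Finset.card_le_card fun τ hτ => ?_)
      obtain ⟨h1, h2⟩ := Finset.mem_filter.1 hτ
      refine Finset.mem_filter.2 ⟨h1, ?_⟩
      rwa [h0 τ h1, h, add_comm]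
  · have hmem : (cnorm X k fun τ => φ τ + cob X (k - 1) ψ τ) ∈
        {m | ∃ ψ : Finset L → ZMod 2, m = cnorm X k fun τ => φ τ + cob X (k - 1) ψ τ} := ⟨ψ, rfl⟩
    refine (Nat.sInf_le hmem).trans (Finset.card_le_card fun τ hτ => ?_)
    obtain ⟨h1, h2⟩ := Finset.mem_filter.1 hτ
    refine Finset.mem_filter.2 ⟨h1, ?_⟩
    obtain ⟨j, rfl⟩ : ∃ j, k = j + 1 := ⟨k - 1, by omega⟩
    simp only [Nat.add_sub_cancel, cob] at h2
    rwa [sum_faces_subset hX h1] at h2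

theorem sum_image_erase {M : Type*} [AddCommMonoid M] (f : Finset L → M)
    {g : L → L} (hg : Function.Injective g) (τ : Finset L) :
    ∑ y ∈ τ.image g, f ((τ.image g).erase y) = ∑ x ∈ τ, f ((τ.erase x).image g) := by
  rw [Finset.sum_image hg.injOn]
  exact Finset.sum_congr rfl fun x _ => by rw [Finset.image_erase hg]

theorem linearCombination_boundary (f : Finset L → ZMod 2) (c : Finset L →₀ ZMod 2) :
    Finsupp.linearCombination (ZMod 2) f (boundary c) =
      Finsupp.linearCombination (ZMod 2) (fun ρ => ∑ x ∈ ρ, f (ρ.erase x)) c := by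
  suffices Finsupp.linearCombination (ZMod 2) f ∘ₗ boundary =
      Finsupp.linearCombination (ZMod 2) (fun ρ => ∑ x ∈ ρ, f (ρ.erase x)) from
    LinearMap.congr_fun this c
  ext1 σ
  ext1
  simp [boundary_single]

theorem image_symm_image [LE L] (g : L ≃o L) (σ : Finset L) : (σ.image g.symm).image g = σ := by
  ext x
  simp

/-- Orbit counting for a set of simplices on which the order automorphisms act transitively. -/
theorem card_mul_card_filter_image_mem [LE L] [Fintype (L ≃o L)] {X S : Finset (Finset L)}
    (hS : S ⊆ X) (hX : ∀ (g : L ≃o L), ∀ σ ∈ X, σ.image g ∈ X)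
    (htrans : ∀ σ ∈ X, ∀ σ' ∈ X, ∃ g : L ≃o L, σ.image g = σ') {ρ : Finset L} (hρ : ρ ∈ X) :
    X.card * (Finset.univ.filter fun g : L ≃o L => ρ.image g ∈ S).card =
      Fintype.card (L ≃o L) * S.card := by
  have h1 : ∀ σ ∈ X, (Finset.univ.filter fun g : L ≃o L => σ.image g ∈ S).card =
      (Finset.univ.filter fun g : L ≃o L => ρ.image g ∈ S).card := by
    intro σ hσ
    obtain ⟨h, rfl⟩ := htrans ρ hρ σ hσ
    refine Finset.card_bij (fun g _ => h.trans g) (fun g hg => ?_) (fun g _ g' _ hgg' => ?_)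
      fun g hg => ⟨h.symm.trans g, ?_, ?_⟩
    · simpa [Finset.image_image, Function.comp_def] using hg
    · ext x
      simpa using DFunLike.congr_fun hgg' (h.symm x)
    · simpa [Finset.image_image, Function.comp_def] using hg
    · ext x
      simp
  have h2 : ∀ g : L ≃o L, (X.filter fun σ => σ.image g ∈ S).card = S.card := by
    intro g
    refine Finset.card_bij (fun σ _ => σ.image g) (fun σ hσ => (Finset.mem_filter.1 hσ).2)
      (fun σ _ σ' _ h => Finset.image_injective g.injective h) fun σ hσ => ?_
    have hσ' := image_symm_image g σ
    exact ⟨σ.image g.symm, Finset.mem_filter.2 ⟨hX g.symm σ (hS hσ), by rwa [hσ']⟩, hσ'⟩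
  have h3 := Finset.sum_card_bipartiteAbove_eq_sum_card_bipartiteBelow (s := X)
    (t := (Finset.univ : Finset (L ≃o L))) fun σ g => σ.image g ∈ S
  simp only [Finset.bipartiteAbove, Finset.bipartiteBelow] at h3
  rw [Finset.sum_congr rfl h1, Finset.sum_congr rfl fun g _ => h2 g] at h3
  simpa using h3

end Cochains

section Expansion

open Module

variable {F V : Type*} [Field F] [AddCommGroup V] [Module F V]

theorem isComplex_of_mem_iff {X : Finset (Finset (Submodule F V))}
    (hX : ∀ σ, σ ∈ X ↔ σ.Nonempty ∧ IsFlag ⊤ σ) : IsComplex X :=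
  ⟨fun σ hσ => ((hX σ).1 hσ).1, fun σ hσ _ hτσ hτ => (hX _).2 ⟨hτ, ((hX σ).1 hσ).2.mono hτσ⟩⟩

theorem mem_faces_iff {X : Finset (Finset (Submodule F V))}
    (hX : ∀ σ, σ ∈ X ↔ σ.Nonempty ∧ IsFlag ⊤ σ) (k : ℕ) (σ : Finset (Submodule F V)) :
    σ ∈ faces X k ↔ IsFlag ⊤ σ ∧ σ.card = k + 1 := by
  rw [faces, Finset.mem_filter, hX]
  exact ⟨fun h => ⟨h.1.2, h.2⟩, fun h => ⟨⟨Finset.card_pos.1 (by omega), h.1⟩, h.2⟩⟩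

variable [DecidableEq (Submodule F V)]

theorem IsFlag.image_orderIso {σ : Finset (Submodule F V)} (hσ : IsFlag ⊤ σ)
    (g : Submodule F V ≃o Submodule F V) : IsFlag ⊤ (σ.image g) := by
  refine ⟨fun x hx => ?_, fun x hx y hy => ?_⟩
  · obtain ⟨U, hU, rfl⟩ := Finset.mem_image.1 hx
    obtain ⟨h0, h1⟩ := hσ.1 U hU
    refine ⟨fun h => h0 ((map_eq_bot_iff g).1 h), ?_⟩
    rw [← map_top g]
    exact g.lt_iff_lt.2 h1
  · obtain ⟨U, hU, rfl⟩ := Finset.mem_image.1 hx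
    obtain ⟨U', hU', rfl⟩ := Finset.mem_image.1 hy
    simpa using hσ.2 U hU U' hU'

theorem image_mem_faces {X : Finset (Finset (Submodule F V))}
    (hX : ∀ σ, σ ∈ X ↔ σ.Nonempty ∧ IsFlag ⊤ σ) {k : ℕ} (g : Submodule F V ≃o Submodule F V)
    {σ : Finset (Submodule F V)} (hσ : σ ∈ faces X k) : σ.image g ∈ faces X k := by
  rw [mem_faces_iff hX] at hσ ⊢
  exact ⟨hσ.1.image_orderIso g, by rw [Finset.card_image_of_injective _ g.injective, hσ.2]⟩

theorem cosys_le_sum {X : Finset (Finset (Submodule F V))}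
    (hX : ∀ σ, σ ∈ X ↔ σ.Nonempty ∧ IsFlag ⊤ σ) {k : ℕ} (hk : k + 3 = finrank F V)
    {c : Finset (Submodule F V) → Finset (Submodule F V) →₀ ZMod 2}
    (hc : IsContraction ⊤ c) (φ : Finset (Submodule F V) → ZMod 2)
    (g : Submodule F V ≃o Submodule F V) :
    cosys X k φ ≤ ∑ τ ∈ faces X k,
      ((c τ).support.filter fun ρ => ρ.image g ∈ csupp X (k + 1) (cob X k φ)).card := by
  have hcomplex := isComplex_of_mem_iff hX
  have hrank : finrank F (⊤ : Submodule F V) = k + 3 := by rw [finrank_top, hk]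
  let ℓ := Finsupp.linearCombination (ZMod 2) fun ρ : Finset (Submodule F V) => φ (ρ.image g)
  have hℓ : ∀ τ ∈ faces X k, φ (τ.image g) + ∑ x ∈ τ, ℓ (c (τ.erase x)) ≠ 0 →
      ∃ ρ ∈ (c τ).support, ρ.image g ∈ csupp X (k + 1) (cob X k φ) := by
    intro τ hτ hne
    obtain ⟨hflag, hcard⟩ := (mem_faces_iff hX k τ).1 hτ
    have hb : boundary (c τ) = Finsupp.single τ 1 + ∑ x ∈ τ, c (τ.erase x) := by
      linear_combination (norm := module) hc.boundary_add τ hflag (by omega) -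
        add_self_chain (∑ x ∈ τ, c (τ.erase x))
    have h1 : φ (τ.image g) + ∑ x ∈ τ, ℓ (c (τ.erase x)) = ℓ (boundary (c τ)) := by
      rw [hb, map_add, map_sum]
      simp [ℓ]
    rw [h1, linearCombination_boundary, Finsupp.linearCombination_apply] at hne
    obtain ⟨ρ, hρ, hρne⟩ := Finset.exists_ne_zero_of_sum_ne_zero hne
    refine ⟨ρ, hρ, ?_⟩
    obtain ⟨hρflag, hρcard⟩ := hc.isFlag τ hflag (by omega) ρ hρ
    have hρg : ρ.image g ∈ faces X (k + 1) :=
      image_mem_faces hX g ((mem_faces_iff hX _ _).2 ⟨hρflag, by omega⟩)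
    refine Finset.mem_filter.2 ⟨hρg, ?_⟩
    rw [cob, sum_faces_subset hcomplex hρg, sum_image_erase φ g.injective]
    exact right_ne_zero_of_smul hρne
  refine (cosys_le hcomplex k φ fun σ => ℓ (c (σ.image g.symm))).trans ?_
  have hle : ((faces X k).filter fun τ => φ τ + ∑ x ∈ τ, ℓ (c ((τ.erase x).image g.symm)) ≠ 0).card
      ≤ ((faces X k).filter fun τ => φ (τ.image g) + ∑ x ∈ τ, ℓ (c (τ.erase x)) ≠ 0).card := by
    refine Finset.card_le_card_of_injOn (fun τ => τ.image g.symm) (fun τ hτ => ?_)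
      (Finset.image_injective g.symm.injective).injOn
    obtain ⟨h1, h2⟩ := Finset.mem_filter.1 hτ
    refine Finset.mem_filter.2 ⟨image_mem_faces hX g.symm h1, ?_⟩
    rwa [image_symm_image, sum_image_erase (fun ρ => ℓ (c ρ)) g.symm.injective]
  refine hle.trans ?_
  rw [Finset.card_filter]
  refine Finset.sum_le_sum fun τ hτ => ?_
  split_ifs with h
  · obtain ⟨ρ, hρ, h⟩ := hℓ τ hτ h
    exact Finset.card_pos.2 ⟨ρ, Finset.mem_filter.2 ⟨hρ, h⟩⟩
  · exact Nat.zero_le _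

variable [FiniteDimensional F V] [Finite F]

theorem card_add_one_mul_sum_card_support_le {X : Finset (Finset (Submodule F V))}
    (hX : ∀ σ, σ ∈ X ↔ σ.Nonempty ∧ IsFlag ⊤ σ) {k : ℕ} (hk : k + 3 = finrank F V)
    {c : Finset (Submodule F V) → Finset (Submodule F V) →₀ ZMod 2} (hc : IsContraction ⊤ c) :
    (Nat.card F + 1) * ∑ τ ∈ faces X k, (c τ).support.card ≤
      (faces X (k + 1)).card * ((finrank F V).factorial - 1) := by
  have hfaces : ∀ σ, σ ∈ faces X (k + 1) ↔ IsFlag ⊤ σ ∧ σ.card + 1 = finrank F V := by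
    intro σ
    rw [mem_faces_iff hX, ← hk]
    exact and_congr_right fun _ => by omega
  calc (Nat.card F + 1) * ∑ τ ∈ faces X k, (c τ).support.card
      ≤ ∑ τ ∈ faces X k, ∑ _σ ∈ (faces X (k + 1)).filter (fun σ => τ ⊆ σ),
          (c τ).support.card := by
        rw [Finset.mul_sum]
        refine Finset.sum_le_sum fun τ hτ => ?_
        obtain ⟨h1, h2⟩ := (mem_faces_iff hX k τ).1 hτ
        rw [Finset.sum_const, smul_eq_mul]
        exact Nat.mul_le_mul_right _ (h1.card_add_one_le (by omega) hfaces)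
    _ = ∑ σ ∈ faces X (k + 1), ∑ τ ∈ (faces X k).filter (fun τ => τ ⊆ σ),
          (c τ).support.card := by
        simp only [Finset.sum_filter]
        exact Finset.sum_comm
    _ ≤ ∑ _σ ∈ faces X (k + 1), ((finrank F V).factorial - 1) := by
        refine Finset.sum_le_sum fun σ hσ => ?_
        rw [sum_faces_subset (isComplex_of_mem_iff hX) hσ fun τ => (c τ).support.card]
        obtain ⟨h1, h2⟩ := (hfaces σ).1 hσ
        have h3 := hc.sum_card σ h1 (by rw [finrank_top, h2])
        rw [finrank_top] at h3
        omega
    _ = _ := by rw [Finset.sum_const, smul_eq_mul]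

theorem card_add_one_mul_cosys_le {X : Finset (Finset (Submodule F V))}
    (hX : ∀ σ, σ ∈ X ↔ σ.Nonempty ∧ IsFlag ⊤ σ) {k : ℕ} (hk : k + 3 = finrank F V)
    (φ : Finset (Submodule F V) → ZMod 2) :
    (Nat.card F + 1) * cosys X k φ ≤
      ((finrank F V).factorial - 1) * cnorm X (k + 1) (cob X k φ) := by
  obtain ⟨c, hc⟩ := exists_isContraction (⊤ : Submodule F V) (by rw [finrank_top]; omega)
  have : Finite V := Module.finite_of_finite F
  have : Finite (Submodule F V ≃o Submodule F V) := DFunLike.finite _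
  have := Fintype.ofFinite (Submodule F V ≃o Submodule F V)
  set S := csupp X (k + 1) (cob X k φ)
  have hsum := card_add_one_mul_sum_card_support_le hX hk hc
  have hcount : ∀ τ ∈ faces X k, ∀ ρ ∈ (c τ).support,
      (faces X (k + 1)).card *
        (Finset.univ.filter fun g : Submodule F V ≃o Submodule F V => ρ.image g ∈ S).card =
      Fintype.card (Submodule F V ≃o Submodule F V) * S.card := by
    intro τ hτ ρ hρ
    obtain ⟨h1, h2⟩ := (mem_faces_iff hX k τ).1 hτ
    obtain ⟨h3, h4⟩ := hc.isFlag τ h1 (by rw [finrank_top]; omega) ρ hρ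
    refine card_mul_card_filter_image_mem (Finset.filter_subset _ _)
      (fun g σ hσ => image_mem_faces hX g hσ) (fun σ hσ σ' hσ' => ?_)
      ((mem_faces_iff hX _ _).2 ⟨h3, by omega⟩)
    obtain ⟨h5, h6⟩ := (mem_faces_iff hX _ _).1 hσ
    obtain ⟨h7, h8⟩ := (mem_faces_iff hX _ _).1 hσ'
    exact h5.exists_orderIso_image_eq h7 (by omega) (by omega)
  have havg : (faces X (k + 1)).card *
      (Fintype.card (Submodule F V ≃o Submodule F V) * cosys X k φ) ≤
      Fintype.card (Submodule F V ≃o Submodule F V) *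
        (S.card * ∑ τ ∈ faces X k, (c τ).support.card) := by
    calc (faces X (k + 1)).card * (Fintype.card (Submodule F V ≃o Submodule F V) * cosys X k φ)
        ≤ (faces X (k + 1)).card * ∑ g : Submodule F V ≃o Submodule F V,
            ∑ τ ∈ faces X k, ((c τ).support.filter fun ρ => ρ.image g ∈ S).card := by
          refine Nat.mul_le_mul_left _ ?_
          rw [← smul_eq_mul, ← Finset.card_univ]
          exact Finset.card_nsmul_le_sum _ _ _ fun g _ => cosys_le_sum hX hk hc φ g
      _ = ∑ τ ∈ faces X k, ∑ ρ ∈ (c τ).support, (faces X (k + 1)).card *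
            (Finset.univ.filter fun g : Submodule F V ≃o Submodule F V => ρ.image g ∈ S).card := by
          rw [Finset.sum_comm, Finset.mul_sum]
          refine Finset.sum_congr rfl fun τ _ => ?_
          rw [← Finset.mul_sum]
          congr 1
          simp only [Finset.card_filter]
          exact Finset.sum_comm
      _ = ∑ τ ∈ faces X k, (c τ).support.card *
            (Fintype.card (Submodule F V ≃o Submodule F V) * S.card) := by
          refine Finset.sum_congr rfl fun τ hτ => ?_
          rw [Finset.sum_congr rfl (hcount τ hτ), Finset.sum_const, smul_eq_mul]
      _ = _ := by
          rw [← Finset.sum_mul]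
          ring
  have hG : 0 < Fintype.card (Submodule F V ≃o Submodule F V) :=
    Fintype.card_pos_iff.2 ⟨OrderIso.refl _⟩
  change _ ≤ _ * S.card
  rcases Nat.eq_zero_or_pos (faces X (k + 1)).card with h0 | h0
  · have h1 : ∑ τ ∈ faces X k, (c τ).support.card = 0 := by
      rw [h0, zero_mul] at hsum
      exact (Nat.mul_eq_zero.1 (Nat.le_zero.1 hsum)).resolve_left (Nat.succ_ne_zero _)
    have h2 : cosys X k φ ≤ 0 :=
      (cosys_le_sum hX hk hc φ (OrderIso.refl _)).trans
        ((Finset.sum_le_sum fun τ _ => Finset.card_filter_le _ _).trans h1.le)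
    simp [Nat.le_zero.1 h2]
  · rw [mul_left_comm] at havg
    have h1 := Nat.le_of_mul_le_mul_left havg hG
    refine Nat.le_of_mul_le_mul_left ?_ h0
    calc (faces X (k + 1)).card * ((Nat.card F + 1) * cosys X k φ)
        = (Nat.card F + 1) * ((faces X (k + 1)).card * cosys X k φ) := by ring
      _ ≤ (Nat.card F + 1) * (S.card * ∑ τ ∈ faces X k, (c τ).support.card) :=
          Nat.mul_le_mul_left _ h1
      _ = S.card * ((Nat.card F + 1) * ∑ τ ∈ faces X k, (c τ).support.card) := by ring
      _ ≤ S.card * ((faces X (k + 1)).card * ((finrank F V).factorial - 1)) :=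
          Nat.mul_le_mul_left _ hsum
      _ = _ := by ring

end Expansion

theorem factorial_le_mul_sum_factorial (k : ℕ) :
    (k + 3).factorial ≤ (k + 2) * ∑ j ∈ Finset.Icc 1 (k + 2), j.factorial := by
  rw [Finset.sum_Icc_succ_top (by omega), Finset.sum_Icc_succ_top (by omega),
    Nat.factorial_succ (k + 2), Nat.factorial_succ (k + 1)]
  have h : 0 ≤ ∑ j ∈ Finset.Icc 1 k, j.factorial := Nat.zero_le _
  nlinarith [Nat.factorial_pos (k + 1)]

end FlagChain

/-- **Expansion of the spherical building `A_{n-1}(F_q)`**: if `Δ` is the order complex of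
the poset of proper nontrivial linear subspaces of `F_q^n` (`n ≥ 3`, `q = |F|`), then
`h^{n-3}(Δ) ≥ (q+1) / ((n-1) ⬝ Σ_{j=1}^{n-1} j!)`. -/
theorem spherical_building_expansion
    {F : Type*} [Field F] [Fintype F] (q : ℕ) (hq : Fintype.card F = q)
    (n : ℕ) (hn : 3 ≤ n)
    [DecidableEq (Submodule F (Fin n → F))]
    (Δ : Finset (Finset (Submodule F (Fin n → F))))
    (hΔ : ∀ σ : Finset (Submodule F (Fin n → F)), σ ∈ Δ ↔
      σ.Nonempty ∧ (∀ W ∈ σ, W ≠ ⊥ ∧ W ≠ ⊤) ∧ ∀ W ∈ σ, ∀ U ∈ σ, W ≤ U ∨ U ≤ W) :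
    ((q : ENNReal) + 1) /
        (((n : ENNReal) - 1) *
          ((∑ j ∈ Finset.Icc 1 (n - 1), Nat.factorial j : ℕ) : ENNReal)) ≤
      cheeger Δ (n - 3) := by
  obtain ⟨k, rfl⟩ : ∃ k, n = k + 3 := ⟨n - 3, by omega⟩
  rw [Nat.add_sub_cancel, show k + 3 - 1 = k + 2 from rfl]
  have hX : ∀ σ, σ ∈ Δ ↔ σ.Nonempty ∧ FlagChain.IsFlag ⊤ σ := by
    intro σ
    rw [hΔ]
    simp only [FlagChain.IsFlag, FlagChain.IsTotal, lt_top_iff_ne_top]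
  refine le_sInf ?_
  rintro r ⟨φ, hφ, rfl⟩
  have hmain := FlagChain.card_add_one_mul_cosys_le hX (k := k) (by simp) φ
  rw [Module.finrank_fin_fun, Nat.card_eq_fintype_card, hq] at hmain
  have hnat : (q + 1) * cosys Δ k φ ≤ cnorm Δ (k + 1) (cob Δ k φ) *
      ((k + 2) * ∑ j ∈ Finset.Icc 1 (k + 2), Nat.factorial j) := by
    refine hmain.trans ?_
    rw [mul_comm]
    exact Nat.mul_le_mul_left _
      ((Nat.sub_le _ _).trans (FlagChain.factorial_le_mul_sum_factorial k))
  have hsub : ((k + 3 : ℕ) : ENNReal) - 1 = ((k + 2 : ℕ) : ENNReal) := by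
    rw [← Nat.cast_one, ← ENNReal.natCast_sub, show k + 3 - 1 = k + 2 from rfl]
  have hpos : (k + 2) * ∑ j ∈ Finset.Icc 1 (k + 2), Nat.factorial j ≠ 0 := by
    have h1 := FlagChain.factorial_le_mul_sum_factorial k
    have h2 := Nat.factorial_pos (k + 3)
    omega
  rw [hsub, ← Nat.cast_mul]
  refine ENNReal.div_le_of_le_mul ?_
  rw [ENNReal.mul_comm_div, ← mul_div_assoc]
  refine (ENNReal.le_div_iff_mul_le (Or.inl (by exact_mod_cast hφ.ne'))
    (Or.inl (ENNReal.natCast_ne_top _))).2 ?_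
  exact_mod_cast hnat
end
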